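/- arXiv:0811.2251 — 2 statements merged into one kernel-verified Lean document; each statement's English description precedes it below -/
import Mathlib

section
/- There is a constant C(n) > 0 depending only on n ≥ 2 such that the following holds. Let L ≥ C(n) and let X ⊆ ℝ^n be a finite union of cylinders of radius 1 and length L. Then for each x ∈ X one can choose a centrally symmetric convex body K(x) ⊆ ℝ^n, and set B(x) := x + K(x), so that: (1) B(x) is a symmetric convex body centered at x; (2) Vol(B(x)) ≤ Vol(X) for every x ∈ X; (3) for every cylinder T ⊆ X of radius 1 and length L and every σ > 0, the set of points x ∈ T for which T is NOT contained in the rescaled body x + σ·K(x) has Lebesgue measure at most C(n) σ^{-1} Vol(T). -/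
open MeasureTheory
open scoped ENNReal

/-- The cylinder of radius 1 and length `L` around the segment from `p` to `p + L • v`
(`v` a unit vector): all points within distance 1 of the segment. -/
noncomputable def tube {n : ℕ} (p v : EuclideanSpace ℝ (Fin n)) (L : ℝ) :
    Set (EuclideanSpace ℝ (Fin n)) :=
  {x | Metric.infDist x {y | ∃ t : ℝ, 0 ≤ t ∧ t ≤ L ∧ y = p + t • v} ≤ 1}



theorem null_poly (d : ℕ) : ∀ (n : ℕ) (c : (Fin n → Fin (d+1)) → ℝ), c ≠ 0 →
    volume {x : Fin n → ℝ | ∑ α, c α * ∏ i, x i ^ (α i : ℕ) = 0} = 0 := by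
  intro n
  induction n with
  | zero =>
    intro c hc
    have : {x : Fin 0 → ℝ | ∑ α, c α * ∏ i, x i ^ (α i : ℕ) = 0} = ∅ := by
      ext x
      simp only [Set.mem_ofPred_eq, Set.mem_empty_iff_false, iff_false]
      intro h
      apply hc
      funext α
      simp at h
      exact (congrArg c (Subsingleton.elim _ _)).trans h
    rw [this]; simp
  | succ n ih =>
    intro c hc
    have hmp := volume_preserving_piFinSuccAbove (fun _ : Fin (n + 1) => ℝ) 0
    set S : Set (ℝ × (Fin n → ℝ)) := {z | ∑ β : Fin n → Fin (d+1),
      (∑ k : Fin (d+1), c (Fin.cons k β) * z.1 ^ (k:ℕ)) * ∏ i, z.2 i ^ (β i : ℕ) = 0} with hS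
    have hSm : MeasurableSet S := by
      apply IsClosed.measurableSet
      apply isClosed_eq _ continuous_const
      fun_prop
    have hpre : {x : Fin (n+1) → ℝ | ∑ α, c α * ∏ i, x i ^ (α i : ℕ) = 0} =
        (MeasurableEquiv.piFinSuccAbove (fun _ : Fin (n + 1) => ℝ) 0) ⁻¹' S := by
      ext x
      simp only [Set.mem_ofPred_eq, hS, Set.mem_preimage, MeasurableEquiv.piFinSuccAbove_apply]
      rw [← (Fin.consEquiv (fun _ : Fin (n+1) => Fin (d+1))).sum_comp, Fintype.sum_prod_type,
        Finset.sum_comm]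
      apply Eq.congr _ rfl
      apply Finset.sum_congr rfl
      intro β _
      rw [Finset.sum_mul]
      apply Finset.sum_congr rfl
      intro k _
      simp [Fin.consEquiv, Fin.prod_univ_succ, Fin.insertNthEquiv, mul_assoc]
      left; left; rfl
    rw [hpre, hmp.measure_preimage hSm.nullMeasurableSet]
    rw [Measure.volume_eq_prod, Measure.measure_prod_null hSm]
    obtain ⟨α0, hα0⟩ := Function.ne_iff.mp hc
    set P : Polynomial ℝ := ∑ k : Fin (d+1), Polynomial.C (c (Fin.cons k (Fin.tail α0))) * Polynomial.X ^ (k:ℕ) with hP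
    have hP0 : P ≠ 0 := by
      intro h
      have h2 := congrArg (fun p => Polynomial.coeff p (α0 0 : ℕ)) h
      simp only [hP, Polynomial.finsetSum_coeff, Polynomial.coeff_C_mul, Polynomial.coeff_X_pow, Polynomial.coeff_zero] at h2
      rw [Finset.sum_eq_single (α0 0)] at h2
      · simp at h2
        exact hα0 h2
      · intro b _ hb
        have : (α0 0 : ℕ) ≠ b := fun h => hb (Fin.ext h.symm)
        simp [this]
      · simp
    have hfin : Set.Finite {t : ℝ | P.IsRoot t} := by
      apply (P.roots.toFinset.finite_toSet).subset
      intro t ht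
      simpa [hP0] using ht
    have hae : ∀ᵐ t : ℝ, t ∉ {t : ℝ | P.IsRoot t} := 
      measure_eq_zero_iff_ae_notMem.mp (hfin.measure_zero _)
    filter_upwards [hae] with t ht
    have := ih (fun β => ∑ k : Fin (d+1), c (Fin.cons k β) * t ^ (k:ℕ)) (by
      intro h
      apply ht
      have h3 := congrFun h (Fin.tail α0)
      simp only [Set.mem_ofPred_eq, Polynomial.IsRoot, hP, Polynomial.eval_finsetSum, Polynomial.eval_mul, Polynomial.eval_C, Polynomial.eval_pow, Polynomial.eval_X]
      simpa using h3)
    simpa [hS] using this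


section iso
variable {V ι : Type*} [MetricSpace V] [MeasurableSpace V] [BorelSpace V] [Fintype ι]

theorem spread (μ : Measure V) [IsFiniteMeasureOnCompacts μ] (X : Set V) (hX : IsCompact X)
    (E : V → ι → ℝ) (hE : Continuous E)
    (hnull : ∀ v : ι → ℝ, v ≠ 0 → μ {x | ∑ i, v i * E x i = 0} = 0) (τ : ℝ) (hτ : 0 < τ) :
    ∃ δ : ℝ, 0 < δ ∧ ∀ v : ι → ℝ, ∑ i, v i ^ 2 = 1 →
      μ.real (X ∩ {x | (∑ i, v i * E x i) ^ 2 < δ}) ≤ τ := by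
  have hXfin : μ X ≠ ∞ := hX.measure_lt_top.ne
  have hs : IsCompact {v : ι → ℝ | ∑ i, v i ^ 2 = 1} := by
    apply Metric.isCompact_of_isClosed_isBounded
    · exact isClosed_eq (by fun_prop) continuous_const
    · apply (Metric.isBounded_closedBall (x := (0 : ι → ℝ)) (r := 1)).subset
      intro v hv
      simp only [Set.mem_ofPred_eq] at hv
      rw [mem_closedBall_zero_iff, pi_norm_le_iff_of_nonneg zero_le_one]
      intro i
      have : v i ^ 2 ≤ ∑ i, v i ^ 2 := Finset.single_le_sum (f := fun i => v i ^ 2) (fun i _ => sq_nonneg _) (Finset.mem_univ i)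
      rw [Real.norm_eq_abs, abs_le_one_iff_mul_self_le_one]
      nlinarith
  suffices h : ∃ δ : ℝ, 0 < δ ∧ ∀ v ∈ {v : ι → ℝ | ∑ i, v i ^ 2 = 1},
      μ.real (X ∩ {x | (∑ i, v i * E x i) ^ 2 < δ}) ≤ τ from h
  refine hs.induction_on (p := fun s => ∃ δ : ℝ, 0 < δ ∧ ∀ v ∈ s,
      μ.real (X ∩ {x | (∑ i, v i * E x i) ^ 2 < δ}) ≤ τ) ?_ ?_ ?_ ?_
  · exact ⟨1, one_pos, by simp⟩
  · rintro s t hst ⟨δ, hδ, h⟩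
    exact ⟨δ, hδ, fun v hv => h v (hst hv)⟩
  · rintro s t ⟨δ, hδ, h⟩ ⟨δ', hδ', h'⟩
    refine ⟨min δ δ', lt_min hδ hδ', ?_⟩
    have mono : ∀ v : ι → ℝ, ∀ a b : ℝ, a ≤ b → μ.real (X ∩ {x | (∑ i, v i * E x i) ^ 2 < a}) ≤
        μ.real (X ∩ {x | (∑ i, v i * E x i) ^ 2 < b}) := by
      intro v a b hab
      apply measureReal_mono
      · rintro x ⟨hx, hx2⟩
        exact ⟨hx, lt_of_lt_of_le hx2 hab⟩
      · exact ne_top_of_le_ne_top hXfin (measure_mono Set.inter_subset_left)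
    rintro v (hv | hv)
    · exact (mono v _ _ (min_le_left _ _)).trans (h v hv)
    · exact (mono v _ _ (min_le_right _ _)).trans (h' v hv)
  · intro v0 hv0
    have hv0' : v0 ≠ 0 := by
      rintro rfl
      simp at hv0
    have hlim : Filter.Tendsto (fun k : ℕ => μ (X ∩ {x | |∑ i, v0 i * E x i| ≤ 2 * (1 / ((k:ℝ) + 1))}))
        Filter.atTop (nhds (μ (⋂ k : ℕ, X ∩ {x | |∑ i, v0 i * E x i| ≤ 2 * (1 / ((k:ℝ) + 1))}))) := by
      apply tendsto_measure_iInter_atTop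
      · intro k
        apply MeasurableSet.nullMeasurableSet
        apply hX.measurableSet.inter
        apply IsClosed.measurableSet
        exact isClosed_le (by fun_prop) continuous_const
      · intro k l hkl x hx
        refine ⟨hx.1, le_trans (Set.mem_ofPred_eq ▸ hx.2) ?_⟩
        have := Nat.one_div_le_one_div (α := ℝ) hkl
        linarith
      · exact ⟨0, ne_top_of_le_ne_top hXfin (measure_mono Set.inter_subset_left)⟩
    have hz : μ (⋂ k : ℕ, X ∩ {x | |∑ i, v0 i * E x i| ≤ 2 * (1 / ((k:ℝ) + 1))}) = 0 := by
      apply measure_mono_null _ (hnull v0 hv0')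
      intro x hx
      simp only [Set.mem_iInter] at hx
      have h1 : ∀ k : ℕ, |∑ i, v0 i * E x i| ≤ 2 * (1 / ((k:ℝ) + 1)) := fun k => (hx k).2
      have h2 : Filter.Tendsto (fun k : ℕ => 2 * (1 / ((k:ℝ) + 1))) Filter.atTop (nhds (2 * 0)) :=
        tendsto_one_div_add_atTop_nhds_zero_nat.const_mul 2
      have h3 : |∑ i, v0 i * E x i| ≤ 2 * 0 := ge_of_tendsto' h2 h1
      have h4 : |∑ i, v0 i * E x i| = 0 := le_antisymm (by linarith) (abs_nonneg _)
      exact abs_eq_zero.mp h4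
    rw [hz] at hlim
    have hev := hlim.eventually (gt_mem_nhds (ENNReal.ofReal_pos.mpr hτ))
    obtain ⟨k, hk⟩ := hev.exists
    set δ0 : ℝ := 1 / ((k:ℝ) + 1) with hδ0
    have hδ0p : 0 < δ0 := by positivity
    have hnb : ∀ᶠ v in nhds v0, ∀ x ∈ X, |∑ i, v i * E x i - ∑ i, v0 i * E x i| < δ0 := by
      apply hX.eventually_forall_of_forall_eventually
      intro x hx
      have hc : Continuous (fun z : (ι → ℝ) × V => |∑ i, z.1 i * E z.2 i - ∑ i, v0 i * E z.2 i|) := by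
        fun_prop
      apply hc.continuousAt.eventually (gt_mem_nhds _)
      simpa using hδ0p
    refine ⟨_, mem_nhdsWithin_of_mem_nhds hnb, δ0 ^ 2, by positivity, ?_⟩
    intro v hv
    have : μ (X ∩ {x | (∑ i, v i * E x i) ^ 2 < δ0 ^ 2}) ≤ ENNReal.ofReal τ := by
      refine le_trans (measure_mono ?_) hk.le
      rintro x ⟨hx, hx2⟩
      refine ⟨hx, ?_⟩
      have h1 := hv x hx
      have h2 : |∑ i, v i * E x i| < δ0 := abs_lt_of_sq_lt_sq hx2 hδ0p.le
      rw [abs_lt] at h1 h2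
      simp only [Set.mem_ofPred_eq]
      rw [abs_le]
      constructor <;> linarith
    exact ENNReal.toReal_le_of_le_ofReal hτ.le this

end iso


set_option linter.unusedSectionVars false
section iso
variable {V ι : Type*} [MetricSpace V] [MeasurableSpace V] [BorelSpace V] [Fintype ι] [DecidableEq ι]

/-- Squared norm of `B E(x)`. -/
noncomputable def qf (E : V → ι → ℝ) (B : Matrix ι ι ℝ) (x : V) : ℝ := ∑ j, (B.mulVec (E x) j) ^ 2

theorem qf_cont (E : V → ι → ℝ) (hE : Continuous E) (B : Matrix ι ι ℝ) : Continuous (qf E B) := by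
  unfold qf Matrix.mulVec dotProduct
  fun_prop

theorem qf_pos (E : V → ι → ℝ) (i0 : ι) (h0 : ∀ x, E x i0 = 1) (B : Matrix ι ι ℝ) (hB : B.det ≠ 0)
    (x : V) : 0 < qf E B x := by
  have hnn : 0 ≤ qf E B x := Finset.sum_nonneg (fun j _ => sq_nonneg _)
  refine lt_of_le_of_ne hnn fun h => ?_
  have h1 : B.mulVec (E x) = 0 := by
    funext j
    have := (Finset.sum_eq_zero_iff_of_nonneg (fun j _ => sq_nonneg (B.mulVec (E x) j))).mp h.symm j (Finset.mem_univ j)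
    simpa using this
  have h2 := Matrix.eq_zero_of_mulVec_eq_zero hB h1
  have := h0 x
  rw [h2] at this
  simp at this

/-- The functional that is (almost) minimized. -/
noncomputable def Ff (μ : Measure V) (X : Set V) (E : V → ι → ℝ) (B : Matrix ι ι ℝ) : ℝ :=
  ∫ x in X, Real.log (qf E B x) ∂μ - (μ.real X / Fintype.card ι) * Real.log (B.det ^ 2)

theorem log_int (μ : Measure V) [IsFiniteMeasureOnCompacts μ] (X : Set V) (hX : IsCompact X)
    (E : V → ι → ℝ) (hE : Continuous E) (i0 : ι) (h0 : ∀ x, E x i0 = 1) (B : Matrix ι ι ℝ) (hB : B.det ≠ 0) :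
    IntegrableOn (fun x => Real.log (qf E B x)) X μ := by
  apply ContinuousOn.integrableOn_compact hX
  apply Continuous.continuousOn
  exact (qf_cont E hE B).log (fun x => (qf_pos E i0 h0 B hB x).ne')

theorem Ff_bdd_norm (μ : Measure V) [IsFiniteMeasureOnCompacts μ] (X : Set V) (hX : IsCompact X)
    (hN : 0 < μ.real X)
    (E : V → ι → ℝ) (hE : Continuous E) (i0 : ι) (h0 : ∀ x, E x i0 = 1)
    (hnull : ∀ v : ι → ℝ, v ≠ 0 → μ {x | ∑ i, v i * E x i = 0} = 0) :
    ∃ m : ℝ, ∀ B : Matrix ι ι ℝ, B.det ≠ 0 → ∑ j, ∑ i, B j i ^ 2 = 1 → m ≤ Ff μ X E B := by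
  have hXfin : μ X ≠ ∞ := hX.measure_lt_top.ne
  have : Nonempty ι := ⟨i0⟩
  have hD : (0:ℝ) < Fintype.card ι := by exact_mod_cast Fintype.card_pos
  set D : ℝ := (Fintype.card ι : ℝ) with hDdef
  set N : ℝ := μ.real X with hNdef
  obtain ⟨δ, hδ, hsp⟩ := spread μ X hX E hE hnull (N / D) (by positivity)
  -- compactness bounds for determinant and adjugate
  have hs : IsCompact {B : Matrix ι ι ℝ | ∑ j, ∑ i, B j i ^ 2 = 1} := by
    have : IsCompact {B : ι → ι → ℝ | ∑ j, ∑ i, B j i ^ 2 = 1} := by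
      apply Metric.isCompact_of_isClosed_isBounded
      · exact isClosed_eq (by fun_prop) continuous_const
      · apply (Metric.isBounded_closedBall (x := (0 : ι → ι → ℝ)) (r := 1)).subset
        intro v hv
        simp only [Set.mem_ofPred_eq] at hv
        rw [mem_closedBall_zero_iff, pi_norm_le_iff_of_nonneg zero_le_one]
        intro j
        rw [pi_norm_le_iff_of_nonneg zero_le_one]
        intro i
        have h1 : v j i ^ 2 ≤ ∑ i, v j i ^ 2 := Finset.single_le_sum (f := fun i => v j i ^ 2) (fun i _ => sq_nonneg _) (Finset.mem_univ i)
        have h2 : ∑ i, v j i ^ 2 ≤ ∑ j, ∑ i, v j i ^ 2 := Finset.single_le_sum (f := fun j => ∑ i, v j i ^ 2) (fun i _ => Finset.sum_nonneg fun _ _ => sq_nonneg _) (Finset.mem_univ j)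
        rw [Real.norm_eq_abs, abs_le_one_iff_mul_self_le_one]
        nlinarith
    exact this
  obtain ⟨C1, hC1⟩ := hs.exists_bound_of_continuousOn (f := fun B : Matrix ι ι ℝ => B.det ^ 2)
    (Continuous.continuousOn (by fun_prop))
  obtain ⟨C2, hC2⟩ := hs.exists_bound_of_continuousOn (f := fun B : Matrix ι ι ℝ => ∑ j, B.adjugate i0 j ^ 2)
    (Continuous.continuousOn (by
      have h := Continuous.matrix_adjugate (A := fun B : Matrix ι ι ℝ => B) continuous_id
      exact continuous_finsetSum _ fun j _ => (h.matrix_elem i0 j).pow 2))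
  set C : ℝ := 1 + |C1| + |C2| with hC
  have hCpos : 1 ≤ C := by simp only [hC]; linarith [abs_nonneg C1, abs_nonneg C2]
  set δ' : ℝ := min 1 (δ / D) with hδ'
  have hδ'p : 0 < δ' := lt_min one_pos (by positivity)
  have hδ'1 : δ' ≤ 1 := min_le_left _ _
  refine ⟨N * Real.log δ' - (N / D) * Real.log C, ?_⟩
  intro B hB hB1
  have hdet : 0 < B.det ^ 2 := by positivity
  have hdC : B.det ^ 2 ≤ C := by
    have := hC1 B hB1
    rw [Real.norm_eq_abs] at this
    have h2 := le_abs_self (B.det ^ 2)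
    have h3 := le_abs_self C1
    have h4 := abs_nonneg C2
    simp only [hC]; linarith
  -- lower bound from adjugate
  have hq1 : ∀ x, B.det ^ 2 / C ≤ qf E B x := by
    intro x
    have h1 : B.adjugate.mulVec (B.mulVec (E x)) i0 = B.det := by
      rw [Matrix.mulVec_mulVec, Matrix.adjugate_mul, Matrix.smul_mulVec, Matrix.one_mulVec]
      simp [h0]
    have h2 : B.det ^ 2 ≤ (∑ j, B.adjugate i0 j ^ 2) * qf E B x := by
      rw [← h1]
      exact Finset.sum_mul_sq_le_sq_mul_sq _ _ _
    have h3 : ∑ j, B.adjugate i0 j ^ 2 ≤ C := by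
      have := hC2 B hB1
      rw [Real.norm_eq_abs] at this
      have h2 := le_abs_self (∑ j, B.adjugate i0 j ^ 2)
      have h3 := le_abs_self C2
      have h4 := abs_nonneg C1
      simp only [hC]; linarith
    rw [div_le_iff₀ (by linarith)]
    have hqn := (qf_pos E i0 h0 B hB x).le
    nlinarith
  -- a big row
  obtain ⟨j0, hj0⟩ : ∃ j, 1 / D ≤ ∑ i, B j i ^ 2 := by
    by_contra hcon
    push Not at hcon
    have : ∑ j, ∑ i, B j i ^ 2 < ∑ j : ι, 1 / D := Finset.sum_lt_sum_of_nonempty Finset.univ_nonempty (fun j _ => hcon j)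
    rw [hB1] at this
    simp [← hDdef, hD.ne'] at this
  set r : ℝ := ∑ i, B j0 i ^ 2 with hr
  have hrp : 0 < r := lt_of_lt_of_le (by positivity) hj0
  have hbadm := hsp (fun i => B j0 i / Real.sqrt r) (by
    simp only [div_pow, Real.sq_sqrt hrp.le]
    rw [← Finset.sum_div, ← hr, div_self hrp.ne'])
  set bad : Set V := {x | (∑ i, B j0 i / Real.sqrt r * E x i) ^ 2 < δ} with hbad
  have hbadmeas : MeasurableSet bad := by
    apply IsOpen.measurableSet
    exact isOpen_lt (by fun_prop) continuous_const
  have hq2 : ∀ x, x ∉ bad → δ' ≤ qf E B x := by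
    intro x hx
    have hx' : δ ≤ (∑ i, B j0 i / Real.sqrt r * E x i) ^ 2 := by
      simpa [hbad] using hx
    have h1 : (B.mulVec (E x) j0) ^ 2 ≤ qf E B x := Finset.single_le_sum (f := fun j => (B.mulVec (E x) j) ^ 2) (fun i _ => sq_nonneg _) (Finset.mem_univ j0)
    have h2 : (∑ i, B j0 i / Real.sqrt r * E x i) ^ 2 = (B.mulVec (E x) j0) ^ 2 / r := by
      have : ∑ i, B j0 i / Real.sqrt r * E x i = (B.mulVec (E x) j0) / Real.sqrt r := by
        rw [Matrix.mulVec, dotProduct, Finset.sum_div]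
        exact Finset.sum_congr rfl fun i _ => by ring
      rw [this, div_pow, Real.sq_sqrt hrp.le]
    rw [h2, le_div_iff₀ hrp] at hx'
    have h3 : δ / D ≤ δ * r := by
      have := mul_le_mul_of_nonneg_left hj0 hδ.le
      rwa [mul_one_div] at this
    exact (min_le_right _ _).trans (by linarith)
  set ℓ : ℝ := Real.log (B.det ^ 2 / C) with hℓ
  have hℓ0 : ℓ ≤ 0 := by
    apply Real.log_nonpos (by positivity)
    rw [div_le_one (by linarith)]; exact hdC
  have hlogδ : Real.log δ' ≤ 0 := Real.log_nonpos hδ'p.le hδ'1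
  have hpt : ∀ x, Real.log δ' + bad.indicator (fun _ => ℓ) x ≤ Real.log (qf E B x) := by
    intro x
    by_cases hx : x ∈ bad
    · simp only [Set.indicator_of_mem hx]
      have := Real.log_le_log (by positivity) (hq1 x)
      linarith
    · simp only [Set.indicator_of_notMem hx]
      have := Real.log_le_log (by positivity) (hq2 x hx)
      linarith
  have : IsFiniteMeasure (μ.restrict X) := ⟨by simpa using hX.measure_lt_top⟩
  have hint1 : Integrable (fun _ : V => Real.log δ') (μ.restrict X) := integrable_const _
  have hint2 : Integrable (fun x : V => bad.indicator (fun _ => ℓ) x) (μ.restrict X) :=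
    (integrable_const ℓ).indicator hbadmeas
  have hI : ∫ x in X, (Real.log δ' + bad.indicator (fun _ => ℓ) x) ∂μ ≤ ∫ x in X, Real.log (qf E B x) ∂μ :=
    integral_mono (hint1.add hint2) (log_int μ X hX E hE i0 h0 B hB) hpt
  rw [integral_add hint1 hint2, integral_indicator_const _ hbadmeas, integral_const] at hI
  have hm1 : (μ.restrict X).real Set.univ = N := by simp [hNdef]
  have hm2 : (μ.restrict X).real bad ≤ N / D := by
    rw [measureReal_restrict_apply hbadmeas, Set.inter_comm]; exact hbadm
  rw [hm1] at hI
  simp only [smul_eq_mul] at hI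
  have h5 : N / D * ℓ ≤ (μ.restrict X).real bad * ℓ := mul_le_mul_of_nonpos_right hm2 hℓ0
  have h6 : ℓ = Real.log (B.det ^ 2) - Real.log C := Real.log_div hdet.ne' (by linarith)
  unfold Ff
  rw [h6] at h5 hI
  have h7 : N / D * (Real.log (B.det ^ 2) - Real.log C) = N / D * Real.log (B.det ^ 2) - N / D * Real.log C := by ring
  linarith

end iso


set_option linter.unusedSectionVars false
section iso
variable {V ι : Type*} [MetricSpace V] [MeasurableSpace V] [BorelSpace V] [Fintype ι] [DecidableEq ι]

theorem Ff_smul (μ : Measure V) [IsFiniteMeasureOnCompacts μ] (X : Set V) (hX : IsCompact X)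
    (E : V → ι → ℝ) (hE : Continuous E) (i0 : ι) (h0 : ∀ x, E x i0 = 1)
    (B : Matrix ι ι ℝ) (hB : B.det ≠ 0) (c : ℝ) (hc : 0 < c) :
    Ff μ X E (c • B) = Ff μ X E B := by
  have hne : Nonempty ι := ⟨i0⟩
  have hD : (0:ℝ) < Fintype.card ι := by exact_mod_cast Fintype.card_pos
  have hq : ∀ x, Real.log (qf E (c • B) x) = Real.log (c ^ 2) + Real.log (qf E B x) := by
    intro x
    rw [← Real.log_mul (by positivity) (qf_pos E i0 h0 B hB x).ne']
    congr 1
    simp only [qf, Matrix.smul_mulVec, Pi.smul_apply, smul_eq_mul, mul_pow, Finset.mul_sum]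
  have hfin : IsFiniteMeasure (μ.restrict X) := ⟨by simpa using hX.measure_lt_top⟩
  unfold Ff
  simp only [hq]
  rw [integral_add (integrable_const _) (log_int μ X hX E hE i0 h0 B hB), integral_const,
    Matrix.det_smul, mul_pow, Real.log_mul (by positivity) (by positivity)]
  have : (μ.restrict X).real Set.univ = μ.real X := by simp
  rw [this, ← pow_mul, mul_comm (Fintype.card ι) 2, pow_mul, Real.log_pow (c ^ 2)]
  simp only [smul_eq_mul]
  field_simp
  ring

theorem Ff_bdd (μ : Measure V) [IsFiniteMeasureOnCompacts μ] (X : Set V) (hX : IsCompact X)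
    (hN : 0 < μ.real X)
    (E : V → ι → ℝ) (hE : Continuous E) (i0 : ι) (h0 : ∀ x, E x i0 = 1)
    (hnull : ∀ v : ι → ℝ, v ≠ 0 → μ {x | ∑ i, v i * E x i = 0} = 0) :
    ∃ m : ℝ, ∀ B : Matrix ι ι ℝ, B.det ≠ 0 → m ≤ Ff μ X E B := by
  obtain ⟨m, hm⟩ := Ff_bdd_norm μ X hX hN E hE i0 h0 hnull
  refine ⟨m, fun B hB => ?_⟩
  have hne : Nonempty ι := ⟨i0⟩
  set r : ℝ := ∑ j, ∑ i, B j i ^ 2 with hr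
  have hr0 : 0 ≤ r := Finset.sum_nonneg fun _ _ => Finset.sum_nonneg fun _ _ => sq_nonneg _
  have hrp : 0 < r := by
    refine lt_of_le_of_ne hr0 fun h => hB ?_
    have h1 : B = 0 := by
      ext j i
      have h2 := (Finset.sum_eq_zero_iff_of_nonneg (fun j _ => Finset.sum_nonneg fun i _ => sq_nonneg (B j i))).mp h.symm j (Finset.mem_univ j)
      have h3 := (Finset.sum_eq_zero_iff_of_nonneg (fun i _ => sq_nonneg (B j i))).mp h2 i (Finset.mem_univ i)
      simpa using h3
    rw [h1]; exact Matrix.det_zero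
  have hc : 0 < (Real.sqrt r)⁻¹ := by positivity
  rw [← Ff_smul μ X hX E hE i0 h0 B hB _ hc]
  apply hm
  · rw [Matrix.det_smul]; positivity
  · simp only [Matrix.smul_apply, smul_eq_mul, mul_pow, ← Finset.mul_sum, inv_pow, Real.sq_sqrt hr0]
    exact inv_mul_cancel₀ hrp.ne'

theorem isotropy (μ : Measure V) [IsFiniteMeasureOnCompacts μ] (X : Set V) (hX : IsCompact X)
    (hN : 0 < μ.real X)
    (E : V → ι → ℝ) (hE : Continuous E) (i0 : ι) (h0 : ∀ x, E x i0 = 1)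
    (hnull : ∀ v : ι → ℝ, v ≠ 0 → μ {x | ∑ i, v i * E x i = 0} = 0) :
    ∃ B : Matrix ι ι ℝ, B.det ≠ 0 ∧ ∀ v : ι → ℝ, ∑ i, v i ^ 2 = 1 →
      ∫ x in X, (∑ j, v j * B.mulVec (E x) j) ^ 2 / qf E B x ∂μ ≤ 4 * (μ.real X / Fintype.card ι) := by
  have hne : Nonempty ι := ⟨i0⟩
  have hD : (0:ℝ) < Fintype.card ι := by exact_mod_cast Fintype.card_pos
  obtain ⟨m, hm⟩ := Ff_bdd μ X hX hN E hE i0 h0 hnull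
  set η : ℝ := μ.real X / Fintype.card ι with hη
  have hηp : 0 < η := by positivity
  obtain ⟨B, hB, hmin⟩ : ∃ B : Matrix ι ι ℝ, B.det ≠ 0 ∧ ∀ B' : Matrix ι ι ℝ, B'.det ≠ 0 →
      Ff μ X E B ≤ Ff μ X E B' + η := by
    set S : Set ℝ := (fun B => Ff μ X E B) '' {B : Matrix ι ι ℝ | B.det ≠ 0} with hS
    have hSne : S.Nonempty := ⟨_, 1, by simp, rfl⟩
    have hSb : BddBelow S := ⟨m, by rintro _ ⟨B, hB, rfl⟩; exact hm B hB⟩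
    obtain ⟨_, ⟨B, hB, rfl⟩, hlt⟩ := exists_lt_of_csInf_lt hSne (lt_add_of_pos_right (sInf S) hηp)
    refine ⟨B, hB, fun B' hB' => ?_⟩
    have : sInf S ≤ Ff μ X E B' := csInf_le hSb ⟨B', hB', rfl⟩
    dsimp only at hlt
    linarith
  refine ⟨B, hB, fun v hv => ?_⟩
  set B' : Matrix ι ι ℝ := (1 + Matrix.replicateCol Unit ((-(1/2:ℝ)) • v) * Matrix.replicateRow Unit v) * B with hB'
  have hdet : B'.det = 1 / 2 * B.det := by
    rw [hB', Matrix.det_mul, Matrix.det_one_add_replicateCol_mul_replicateRow]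
    congr 1
    simp only [dotProduct, Pi.smul_apply, smul_eq_mul]
    have : ∑ i, v i * (-(1/2:ℝ) * v i) = -(1/2) * ∑ i, v i ^ 2 := by
      rw [Finset.mul_sum]; exact Finset.sum_congr rfl fun i _ => by ring
    rw [this, hv]; norm_num
  have hB'0 : B'.det ≠ 0 := by rw [hdet]; exact mul_ne_zero (by norm_num) hB
  have hmv : ∀ x j, B'.mulVec (E x) j = B.mulVec (E x) j - 1/2 * v j * ∑ i, v i * B.mulVec (E x) i := by
    intro x j
    rw [hB', ← Matrix.mulVec_mulVec, Matrix.add_mulVec, Matrix.one_mulVec, ← Matrix.mulVec_mulVec]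
    simp only [Pi.add_apply, Matrix.mulVec, dotProduct, Matrix.replicateCol_apply, Matrix.replicateRow_apply,
      Pi.smul_apply, smul_eq_mul, Finset.univ_unique, Finset.sum_const, Finset.card_singleton, one_smul]
    ring
  have hq' : ∀ x, qf E B' x = qf E B x - 3/4 * (∑ i, v i * B.mulVec (E x) i) ^ 2 := by
    intro x
    set w := ∑ i, v i * B.mulVec (E x) i with hw
    have : qf E B' x = ∑ j, ((B.mulVec (E x) j)^2 - w * (v j * B.mulVec (E x) j) + 1/4 * w^2 * v j ^ 2) := by
      unfold qf
      refine Finset.sum_congr rfl fun j _ => ?_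
      rw [hmv, ← hw]; ring
    rw [this, Finset.sum_add_distrib, Finset.sum_sub_distrib, ← Finset.mul_sum, ← Finset.mul_sum, hv, ← hw]
    unfold qf
    ring
  set ρ : V → ℝ := fun x => (∑ j, v j * B.mulVec (E x) j) ^ 2 / qf E B x with hρ
  have hqp := qf_pos E i0 h0 B hB
  have hqp' := qf_pos E i0 h0 B' hB'0
  have hρint : IntegrableOn ρ X μ := by
    apply ContinuousOn.integrableOn_compact hX
    apply Continuous.continuousOn
    refine Continuous.div ?_ (qf_cont E hE B) (fun x => (hqp x).ne')
    unfold Matrix.mulVec dotProduct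
    fun_prop
  have hpt : ∀ x, Real.log (qf E B' x) ≤ Real.log (qf E B x) - 3/4 * ρ x := by
    intro x
    have h1 : qf E B' x = qf E B x * (1 - 3/4 * ρ x) := by
      rw [hq']; simp only [hρ]; have := (hqp x).ne'; field_simp
    have h2 : 0 < 1 - 3/4 * ρ x := by
      have := hqp' x
      rw [h1] at this
      exact (mul_pos_iff_of_pos_left (hqp x)).mp this
    rw [h1, Real.log_mul (hqp x).ne' h2.ne']
    have := Real.log_le_sub_one_of_pos h2
    linarith
  have hI : ∫ x in X, Real.log (qf E B' x) ∂μ ≤ ∫ x in X, (Real.log (qf E B x) - 3/4 * ρ x) ∂μ :=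
    integral_mono (log_int μ X hX E hE i0 h0 B' hB'0)
      ((log_int μ X hX E hE i0 h0 B hB).sub (hρint.const_mul _)) hpt
  rw [integral_sub (log_int μ X hX E hE i0 h0 B hB) (hρint.const_mul _), integral_const_mul] at hI
  have hF := hmin B' hB'0
  unfold Ff at hF
  rw [hdet, mul_pow, Real.log_mul (by norm_num) (by positivity), ← hη] at hF
  have hlog : Real.log ((1/2:ℝ)^2) ≥ -2 := by
    rw [Real.log_pow, one_div, Real.log_inv]
    have := Real.log_two_lt_d9
    push_cast
    linarith
  have : η * Real.log ((1/2:ℝ)^2) ≥ η * (-2) := mul_le_mul_of_nonneg_left hlog hηp.le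
  nlinarith

end iso


noncomputable def sv : Fin 6 → ℝ := ![0,0,0,0,Real.sqrt 3,-Real.sqrt 3]

noncomputable def lin {D : ℕ} (a : Fin D → ℝ) (ω : Fin D → Fin 6) : ℝ := ∑ i, a i * sv (ω i)

/-- expectation -/
noncomputable def ex {D : ℕ} (f : (Fin D → Fin 6) → ℝ) : ℝ := ∑ ω, (1/6:ℝ)^D * f ω

theorem ex_add {D : ℕ} (f g : (Fin D → Fin 6) → ℝ) : ex (fun ω => f ω + g ω) = ex f + ex g := by
  simp [ex, mul_add, Finset.sum_add_distrib]

theorem ex_mul {D : ℕ} (c : ℝ) (f : (Fin D → Fin 6) → ℝ) : ex (fun ω => c * f ω) = c * ex f := by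
  simp only [ex, Finset.mul_sum]
  exact Finset.sum_congr rfl fun _ _ => by ring

theorem ex_mono {D : ℕ} (f g : (Fin D → Fin 6) → ℝ) (h : ∀ ω, f ω ≤ g ω) : ex f ≤ ex g := by
  apply Finset.sum_le_sum
  intro ω _
  exact mul_le_mul_of_nonneg_left (h ω) (by positivity)

theorem ex_const {D : ℕ} (c : ℝ) : ex (fun _ : Fin D → Fin 6 => c) = c := by
  simp [ex]

theorem ex_succ {D : ℕ} (f : (Fin (D+1) → Fin 6) → ℝ) :
    ex f = ex (fun ω => ∑ k, (1/6:ℝ) * f (Fin.cons k ω)) := by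
  unfold ex
  rw [← (Fin.consEquiv (fun _ : Fin (D+1) => Fin 6)).sum_comp, Fintype.sum_prod_type, Finset.sum_comm]
  refine Finset.sum_congr rfl fun ω _ => ?_
  rw [Finset.mul_sum]
  refine Finset.sum_congr rfl fun k _ => ?_
  rw [pow_succ, mul_assoc]; rfl

theorem lin_cons {D : ℕ} (a : Fin (D+1) → ℝ) (k : Fin 6) (ω : Fin D → Fin 6) :
    lin a (Fin.cons k ω) = a 0 * sv k + lin (Fin.tail a) ω := by
  simp [lin, Fin.sum_univ_succ, Fin.tail]

theorem sqrt3_4 : Real.sqrt 3 ^ 4 = 9 := by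
  have : Real.sqrt 3 ^ 2 = 3 := Real.sq_sqrt (by norm_num)
  calc Real.sqrt 3 ^ 4 = (Real.sqrt 3 ^ 2)^2 := by ring
    _ = 9 := by rw [this]; norm_num

theorem ex_sq : ∀ {D : ℕ} (a : Fin D → ℝ), ex (fun ω => lin a ω ^ 2) = ∑ i, a i ^ 2 := by
  intro D
  induction D with
  | zero => intro a; simp [ex, lin]
  | succ D ih =>
    intro a
    rw [ex_succ]
    have h3 : Real.sqrt 3 ^ 2 = 3 := Real.sq_sqrt (by norm_num)
    have : ∀ ω : Fin D → Fin 6, ∑ k, (1/6:ℝ) * lin a (Fin.cons k ω) ^ 2 = lin (Fin.tail a) ω ^ 2 + a 0 ^ 2 := by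
      intro ω
      simp only [lin_cons, Fin.sum_univ_six, sv]
      simp
      linear_combination (1/3 * a 0 ^ 2) * h3
    simp only [this]
    rw [ex_add, ex_const, ih, Fin.sum_univ_succ]
    simp only [Fin.tail]
    ring

theorem ex_four : ∀ {D : ℕ} (a : Fin D → ℝ), ex (fun ω => lin a ω ^ 4) = 3 * (∑ i, a i ^ 2) ^ 2 := by
  intro D
  induction D with
  | zero => intro a; simp [ex, lin]
  | succ D ih =>
    intro a
    rw [ex_succ]
    have h3 : Real.sqrt 3 ^ 2 = 3 := Real.sq_sqrt (by norm_num)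
    have : ∀ ω : Fin D → Fin 6, ∑ k, (1/6:ℝ) * lin a (Fin.cons k ω) ^ 4 =
        lin (Fin.tail a) ω ^ 4 + (6 * a 0 ^ 2 * lin (Fin.tail a) ω ^ 2 + 3 * a 0 ^ 4) := by
      intro ω
      simp only [lin_cons, Fin.sum_univ_six, sv]
      simp
      linear_combination (2 * a 0 ^ 2 * lin (Fin.tail a) ω ^ 2) * h3 + (1/3 * a 0 ^ 4) * sqrt3_4
    simp only [this]
    rw [ex_add, ex_add, ex_const, ex_mul, ex_sq, ih, Fin.sum_univ_succ]
    simp only [Fin.tail]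
    ring

theorem ex_exp {D : ℕ} (a : Fin D → ℝ) : ex (fun ω => Real.exp (lin a ω)) ≤ Real.exp (3/2 * ∑ i, a i ^ 2) := by
  induction D with
  | zero => simp [ex, lin]
  | succ D ih =>
    rw [ex_succ]
    have h3 : Real.sqrt 3 ^ 2 = 3 := Real.sq_sqrt (by norm_num)
    have : ∀ ω : Fin D → Fin 6, ∑ k, (1/6:ℝ) * Real.exp (lin a (Fin.cons k ω)) ≤
        Real.exp (3/2 * a 0 ^ 2) * Real.exp (lin (Fin.tail a) ω) := by
      intro ω
      simp only [lin_cons, Fin.sum_univ_six, sv, Real.exp_add]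
      simp
      have h1 : Real.exp (a 0 * Real.sqrt 3) + Real.exp (-(a 0 * Real.sqrt 3)) ≤ 2 * Real.exp (3/2 * a 0 ^ 2) := by
        have := Real.cosh_le_exp_half_sq (a 0 * Real.sqrt 3)
        rw [Real.cosh_eq, mul_pow, h3, show a 0 ^ 2 * 3 / 2 = 3/2 * a 0 ^ 2 by ring] at this
        linarith
      have h2 : 1 ≤ Real.exp (3/2 * a 0 ^ 2) := Real.one_le_exp (by positivity)
      have h4 := Real.exp_pos (lin (Fin.tail a) ω)
      nlinarith
    refine (ex_mono _ _ this).trans ?_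
    rw [ex_mul, Fin.sum_univ_succ, mul_add, Real.exp_add]
    exact mul_le_mul_of_nonneg_left (ih (Fin.tail a)) (Real.exp_pos _).le

theorem ex_ten {D : ℕ} (a : Fin D → ℝ) (ha : ∑ i, a i ^ 2 = 1) :
    ex (fun ω => lin a ω ^ 10) ≤ 2 * (Nat.factorial 10) * Real.exp (3/2) := by
  have hpt : ∀ ω, lin a ω ^ 10 ≤ (Nat.factorial 10 : ℝ) * (Real.exp (lin a ω) + Real.exp (lin (fun i => - a i) ω)) := by
    intro ω
    have h1 : lin (fun i => - a i) ω = - lin a ω := by simp [lin]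
    rw [h1]
    set x := lin a ω
    have h2 := Real.pow_div_factorial_le_exp |x| (abs_nonneg _) 10
    rw [div_le_iff₀ (by positivity), mul_comm, Even.pow_abs (by decide)] at h2
    refine h2.trans (mul_le_mul_of_nonneg_left ?_ (by positivity))
    rcases abs_cases x with ⟨h, _⟩ | ⟨h, _⟩ <;> rw [h]
    · linarith [Real.exp_pos (-x)]
    · linarith [Real.exp_pos x]
  refine (ex_mono _ _ hpt).trans ?_
  rw [ex_mul, ex_add]
  have h1 := ex_exp a
  have h2 := ex_exp (fun i => - a i)
  simp only [neg_sq] at h2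
  rw [ha, mul_one] at h1 h2
  have h3 : (0:ℝ) < Nat.factorial 10 := by positivity
  nlinarith

theorem moment_main : ∃ C0 : ℝ, 0 < C0 ∧ ∀ (D : ℕ) (a b : Fin D → ℝ), ∑ i, a i ^ 2 = 1 → ∑ i, b i ^ 2 = 1 →
    1 ≤ 2 * (∑ i, a i * b i) ^ 2 + C0 * ex (fun ω =>
      |lin a ω ^ 2 / (1 + lin a ω ^ 2) - lin b ω ^ 2 / (1 + lin b ω ^ 2)|) := by
  set M : ℝ := 2 * (Nat.factorial 10) * Real.exp (3/2) with hM
  have hMp : 0 < M := by positivity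
  set Q : ℝ := 81 * (1 + M + M) with hQ
  have hQp : 0 < Q := by positivity
  refine ⟨Q / 16, by positivity, ?_⟩
  intro D a b ha hb
  set ρ := ∑ i, a i * b i with hρ
  have hW : ex (fun ω => (lin a ω ^ 2 - lin b ω ^ 2) ^ 2) = 4 - 4 * ρ ^ 2 := by
    have hp := ex_four (fun i => a i + b i)
    have hm := ex_four (fun i => a i - b i)
    have e1 : ∀ ω, lin (fun i => a i + b i) ω = lin a ω + lin b ω := by
      intro ω; simp [lin, add_mul, Finset.sum_add_distrib]
    have e2 : ∀ ω, lin (fun i => a i - b i) ω = lin a ω - lin b ω := by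
      intro ω; simp [lin, sub_mul, Finset.sum_sub_distrib]
    have s1 : ∑ i, (a i + b i) ^ 2 = 2 + 2 * ρ := by
      have : ∀ i, (a i + b i) ^ 2 = a i ^ 2 + b i ^ 2 + 2 * (a i * b i) := fun i => by ring
      simp only [this, Finset.sum_add_distrib, ← Finset.mul_sum, ha, hb]; rw [← hρ]; ring
    have s2 : ∑ i, (a i - b i) ^ 2 = 2 - 2 * ρ := by
      have : ∀ i, (a i - b i) ^ 2 = a i ^ 2 + b i ^ 2 + (-2) * (a i * b i) := fun i => by ring
      simp only [this, Finset.sum_add_distrib, ← Finset.mul_sum, ha, hb]; rw [← hρ]; ring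
    simp only [e1, s1] at hp
    simp only [e2, s2] at hm
    have h4a := ex_four a
    have h4b := ex_four b
    rw [ha] at h4a
    rw [hb] at h4b
    have : ∀ ω, (lin a ω ^ 2 - lin b ω ^ 2) ^ 2 = (4/3) * lin a ω ^ 4 + ((4/3) * lin b ω ^ 4 +
      ((-1/6) * (lin a ω + lin b ω) ^ 4 + (-1/6) * (lin a ω - lin b ω)^4)) := fun ω => by ring
    simp only [this]
    rw [ex_add, ex_add, ex_add, ex_mul, ex_mul, ex_mul, ex_mul, hp, hm, h4a, h4b]
    ring
  have hpt : ∀ ω, (lin a ω ^ 2 - lin b ω ^ 2) ^ 2 ≤ (2 / Q) * (81 * (1 + lin a ω ^ 10 + lin b ω ^ 10)) +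
      (Q / 8) * |lin a ω ^ 2 / (1 + lin a ω ^ 2) - lin b ω ^ 2 / (1 + lin b ω ^ 2)| := by
    intro ω
    have hx : 0 ≤ lin a ω ^ 2 := sq_nonneg _
    have hy : 0 ≤ lin b ω ^ 2 := sq_nonneg _
    have e1 : lin a ω ^ 10 = (lin a ω ^ 2) ^ 5 := by ring
    have e2 : lin b ω ^ 10 = (lin b ω ^ 2) ^ 5 := by ring
    rw [e1, e2]
    set x := lin a ω ^ 2
    set y := lin b ω ^ 2
    have h1 : x / (1 + x) - y / (1 + y) = (x - y) / ((1 + x) * (1 + y)) := by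
      field_simp; ring
    rw [h1, abs_div, abs_of_pos (show 0 < (1 + x) * (1 + y) by positivity)]
    set W := |x - y| with hWd
    have hW0 : 0 ≤ W := abs_nonneg _
    set d := (1 + x) * (1 + y) with hd
    have hdp : 0 < d := by positivity
    have hWs : (x - y) ^ 2 = W ^ 2 := (sq_abs _).symm
    have hWle : W ≤ x + y := by
      rw [hWd, abs_le]; constructor <;> linarith
    have h2 : W ^ 3 * d ≤ 81 * (1 + x ^ 5 + y ^ 5) := by
      have k1 : W ^ 3 ≤ (1 + x + y) ^ 3 := pow_le_pow_left₀ hW0 (by linarith) 3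
      have k2 : d ≤ (1 + x + y) ^ 2 := by rw [hd]; nlinarith
      have k3 : W ^ 3 * d ≤ (1 + x + y) ^ 3 * (1 + x + y) ^ 2 := mul_le_mul k1 k2 hdp.le (by positivity)
      have k4 : (1 + x + y) ^ 5 ≤ 81 * (1 + x ^ 5 + y ^ 5) := by
        have k5 := pow_sum_le_card_mul_sum_pow (s := Finset.univ) (f := ![1, x, y]) (by
          intro i _
          fin_cases i <;> simp [hx, hy]) 4
        simp [Fin.sum_univ_three] at k5
        norm_num at k5
        linarith
      calc W ^ 3 * d ≤ (1 + x + y) ^ 3 * (1 + x + y) ^ 2 := k3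
        _ = (1 + x + y) ^ 5 := by ring
        _ ≤ _ := k4
    have h3 : W ^ 2 ≤ (2 / Q) * (W ^ 3 * d) + (Q / 8) * (W / d) := by
      have : (2 / Q) * (W ^ 3 * d) + (Q / 8) * (W / d) - W ^ 2 = (W / d) * (2 / Q) * (W * d - Q / 4) ^ 2 := by
        field_simp; ring
      have h5 : 0 ≤ (W / d) * (2 / Q) * (W * d - Q / 4) ^ 2 := by positivity
      linarith
    rw [hWs]
    refine h3.trans ?_
    have : (2 / Q) * (W ^ 3 * d) ≤ (2 / Q) * (81 * (1 + x ^ 5 + y ^ 5)) := mul_le_mul_of_nonneg_left h2 (by positivity)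
    linarith
  have hE := ex_mono _ _ hpt
  rw [hW, ex_add, ex_mul, ex_mul, ex_mul, ex_add, ex_add, ex_const] at hE
  have ha10 := ex_ten a ha
  have hb10 := ex_ten b hb
  rw [← hM] at ha10 hb10
  have h81 : (2 / Q) * (81 * (1 + ex (fun ω => lin a ω ^ 10) + ex (fun ω => lin b ω ^ 10))) ≤ 2 := by
    rw [div_mul_eq_mul_div, div_le_iff₀ hQp, hQ]
    linarith
  linarith


theorem variation_aux (F F' : ℝ → ℝ) (hF : ∀ t, HasDerivAt F (F' t) t) (hF' : Continuous F')
    (h01 : ∀ t, 0 ≤ F t ∧ F t ≤ 1) (Z : Finset ℝ) (hZ : ∀ t, F' t = 0 → t ∈ Z) :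
    ∀ (k : ℕ) (a b : ℝ), a ≤ b → (Z.filter (fun z => a < z ∧ z < b)).card = k →
      ∫ t in a..b, |F' t| ≤ k + 1 := by
  intro k
  induction k using Nat.strong_induction_on with
  | _ k ih =>
    intro a b hab hk
    have hint : ∀ c d : ℝ, IntervalIntegrable (fun t => |F' t|) volume c d := fun c d =>
      (hF'.abs).intervalIntegrable c d
    by_cases hne : (Z.filter (fun z => a < z ∧ z < b)).Nonempty
    · obtain ⟨z, hz⟩ := hne
      have hz' := (Finset.mem_filter.mp hz).2
      have hsub : (Z.filter (fun w => a < w ∧ w < z)).card + (Z.filter (fun w => z < w ∧ w < b)).card + 1 ≤ k := by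
        rw [← hk, ← Finset.card_union_of_disjoint]
        · rw [← Finset.card_erase_add_one hz]
          apply Nat.succ_le_succ
          apply Finset.card_le_card
          intro w hw
          simp only [Finset.mem_union, Finset.mem_filter, Finset.mem_erase] at hw ⊢
          rcases hw with ⟨h1, h2, h3⟩ | ⟨h1, h2, h3⟩
          · exact ⟨h3.ne, h1, h2, h3.trans hz'.2⟩
          · exact ⟨h2.ne', h1, hz'.1.trans h2, h3⟩
        · rw [Finset.disjoint_left]
          intro w hw hw'
          have h1 := (Finset.mem_filter.mp hw).2
          have h2 := (Finset.mem_filter.mp hw').2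
          linarith [h1.2, h2.1]
      have i1 := ih _ (by omega) a z hz'.1.le rfl
      have i2 := ih _ (by omega) z b hz'.2.le rfl
      rw [← intervalIntegral.integral_add_adjacent_intervals (hint a z) (hint z b)]
      have : ((Z.filter (fun w => a < w ∧ w < z)).card : ℝ) + (Z.filter (fun w => z < w ∧ w < b)).card + 1 ≤ k := by
        exact_mod_cast hsub
      linarith
    · rw [Finset.not_nonempty_iff_eq_empty] at hne
      have hnz : ∀ t ∈ Set.Ioo a b, F' t ≠ 0 := by
        intro t ht h0
        have : t ∈ Z.filter (fun z => a < z ∧ z < b) := Finset.mem_filter.mpr ⟨hZ t h0, ht⟩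
        rw [hne] at this
        simp at this
      have hsign : (∀ t ∈ Set.Ioo a b, 0 ≤ F' t) ∨ (∀ t ∈ Set.Ioo a b, F' t ≤ 0) := by
        by_contra hcon
        push Not at hcon
        obtain ⟨⟨s, hs, hs'⟩, ⟨t, ht, ht'⟩⟩ := hcon
        have hpc : IsPreconnected (Set.Ioo a b) := isPreconnected_Ioo
        have := hpc.intermediate_value hs ht hF'.continuousOn
        obtain ⟨w, hw, hw'⟩ := this ⟨hs'.le, ht'.le⟩
        exact hnz w hw hw'
      have hfund : ∫ t in a..b, F' t = F b - F a :=
        intervalIntegral.integral_eq_sub_of_hasDerivAt (fun t _ => hF t) (hF'.intervalIntegrable a b)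
      have hk0 : (0:ℝ) ≤ k := Nat.cast_nonneg k
      have ha := h01 a
      have hb := h01 b
      rcases hsign with hs | hs
      · have : ∫ t in a..b, |F' t| = ∫ t in a..b, F' t := by
          rw [intervalIntegral.integral_of_le hab, intervalIntegral.integral_of_le hab,
            integral_Ioc_eq_integral_Ioo, integral_Ioc_eq_integral_Ioo]
          exact setIntegral_congr_fun measurableSet_Ioo fun t ht => abs_of_nonneg (hs t ht)
        rw [this, hfund]; linarith [ha.1, hb.2]
      · have : ∫ t in a..b, |F' t| = ∫ t in a..b, - F' t := by
          rw [intervalIntegral.integral_of_le hab, intervalIntegral.integral_of_le hab,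
            integral_Ioc_eq_integral_Ioo, integral_Ioc_eq_integral_Ioo]
          exact setIntegral_congr_fun measurableSet_Ioo fun t ht => abs_of_nonpos (hs t ht)
        rw [this, intervalIntegral.integral_neg, hfund]; linarith [ha.2, hb.1]

theorem variation_rat (m : ℕ) (p r : Polynomial ℝ) (hp : p.natDegree ≤ m) (hr : r.natDegree ≤ 2 * m)
    (hpos : ∀ t, 0 < r.eval t) (s s' : ℝ → ℝ) (hs : ∀ t, s t = p.eval t ^ 2 / (r.eval t + p.eval t ^ 2))
    (hd : ∀ t, HasDerivAt s (s' t) t) (hc : Continuous s') (a b : ℝ) (hab : a ≤ b) :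
    ∫ t in a..b, |s' t| ≤ 4 * m + 1 := by
  open Polynomial in
  set Num : Polynomial ℝ := C 2 * (p * (derivative p * r)) - p ^ 2 * derivative r with hNum
  have hden : ∀ t, 0 < r.eval t + p.eval t ^ 2 := fun t => add_pos_of_pos_of_nonneg (hpos t) (sq_nonneg _)
  have hs' : ∀ t, s' t = Num.eval t / (r.eval t + p.eval t ^ 2) ^ 2 := by
    intro t
    have h1 : HasDerivAt (fun t => p.eval t ^ 2 / (r.eval t + p.eval t ^ 2))
      (((2 * p.eval t * (p.derivative.eval t)) * (r.eval t + p.eval t ^ 2) -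
        p.eval t ^ 2 * (r.derivative.eval t + 2 * p.eval t * (p.derivative.eval t))) / (r.eval t + p.eval t ^ 2) ^ 2) t := by
      have hp2 : HasDerivAt (fun t => p.eval t ^ 2) (2 * p.eval t * (p.derivative.eval t)) t := by
        have h5 := (p.hasDerivAt t).mul (p.hasDerivAt t)
        have h6 : (fun t => p.eval t ^ 2) = (fun t => p.eval t) * (fun t => p.eval t) := by
          funext t; simp [sq]
        rw [h6]
        have h7 : 2 * p.eval t * (p.derivative.eval t) = p.derivative.eval t * p.eval t + p.eval t * p.derivative.eval t := by ring
        rw [h7]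
        exact h5
      exact hp2.div ((r.hasDerivAt t).add hp2) (hden t).ne'
    have h2 : s = fun t => p.eval t ^ 2 / (r.eval t + p.eval t ^ 2) := funext hs
    rw [← h2] at h1
    rw [(hd t).unique h1]
    congr 1
    simp [hNum]
    ring
  by_cases h0 : Num = 0
  · have : ∀ t, s' t = 0 := fun t => by rw [hs', h0]; simp
    simp only [this]
    simp
    positivity
  · have hdeg : Num.natDegree ≤ 4 * m := by
      refine (Polynomial.natDegree_sub_le _ _).trans (max_le ?_ ?_)
      · refine (Polynomial.natDegree_C_mul_le _ _).trans ?_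
        refine Polynomial.natDegree_mul_le.trans ?_
        have h1 := Polynomial.natDegree_mul_le (p := p.derivative) (q := r)
        have h2 := Polynomial.natDegree_derivative_le p
        omega
      · refine Polynomial.natDegree_mul_le.trans ?_
        have h1 := Polynomial.natDegree_pow_le (p := p) (n := 2)
        have h2 := Polynomial.natDegree_derivative_le r
        omega
    have hv := variation_aux s s' hd hc (fun t => by
      rw [hs]
      refine ⟨div_nonneg (sq_nonneg _) (hden t).le, ?_⟩
      rw [div_le_one (hden t)]
      linarith [hpos t]) Num.roots.toFinset (fun t ht => by
        rw [hs', div_eq_zero_iff] at ht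
        rcases ht with ht | ht
        · simp [h0, ht]
        · exact absurd ht (pow_pos (hden t) 2).ne') _ a b hab rfl
    refine hv.trans ?_
    have : ((Num.roots.toFinset.filter (fun z => a < z ∧ z < b)).card) ≤ 4 * m :=
      (Finset.card_filter_le _ _).trans ((Multiset.toFinset_card_le _).trans ((Polynomial.card_roots' _).trans hdeg))
    have h2 : ((Num.roots.toFinset.filter (fun z => a < z ∧ z < b)).card : ℝ) ≤ 4 * m := by exact_mod_cast this
    linarith




section tubes
variable {n : ℕ}

theorem seg_eq (p v : EuclideanSpace ℝ (Fin n)) (L : ℝ) :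
    {y | ∃ t : ℝ, 0 ≤ t ∧ t ≤ L ∧ y = p + t • v} = (fun t : ℝ => p + t • v) '' Set.Icc 0 L := by
  ext y
  constructor
  · rintro ⟨t, h0, h1, rfl⟩; exact ⟨t, ⟨h0, h1⟩, rfl⟩
  · rintro ⟨t, ⟨h0, h1⟩, rfl⟩; exact ⟨t, h0, h1, rfl⟩

theorem seg_compact (p v : EuclideanSpace ℝ (Fin n)) (L : ℝ) :
    IsCompact {y | ∃ t : ℝ, 0 ≤ t ∧ t ≤ L ∧ y = p + t • v} := by
  rw [seg_eq]
  exact isCompact_Icc.image (by fun_prop)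

theorem mem_tube {p v x : EuclideanSpace ℝ (Fin n)} {L : ℝ} (hL : 0 ≤ L) :
    x ∈ tube p v L ↔ ∃ t : ℝ, 0 ≤ t ∧ t ≤ L ∧ dist x (p + t • v) ≤ 1 := by
  constructor
  · intro hx
    obtain ⟨y, ⟨t, h0, h1, rfl⟩, hy⟩ := (seg_compact p v L).exists_infDist_eq_dist ⟨p, 0, le_rfl, hL, by simp⟩ x
    refine ⟨t, h0, h1, ?_⟩
    rw [← hy]; exact hx
  · rintro ⟨t, h0, h1, h2⟩
    exact (Metric.infDist_le_dist_of_mem (s := {y | ∃ t : ℝ, 0 ≤ t ∧ t ≤ L ∧ y = p + t • v}) ⟨t, h0, h1, rfl⟩).trans h2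

theorem tube_closed (p v : EuclideanSpace ℝ (Fin n)) (L : ℝ) : IsClosed (tube p v L) :=
  isClosed_le (Metric.continuous_infDist_pt _) continuous_const

theorem tube_compact (p v : EuclideanSpace ℝ (Fin n)) (L : ℝ) (hL : 0 ≤ L) : IsCompact (tube p v L) := by
  apply Metric.isCompact_of_isClosed_isBounded (tube_closed p v L)
  have := (seg_compact p v L).isBounded.cthickening (δ := 1)
  refine this.subset ?_
  intro x hx
  obtain ⟨t, h0, h1, h2⟩ := (mem_tube hL).mp hx
  exact Metric.mem_cthickening_of_dist_le x _ 1 _ ⟨t, h0, h1, rfl⟩ h2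

theorem tube_lintegral (q u : EuclideanSpace ℝ (Fin n)) (hu : ‖u‖ = 1) (L : ℝ) (hL : 0 ≤ L)
    (H : EuclideanSpace ℝ (Fin n) → ℝ≥0∞) (hH : Measurable H) (M : ℝ≥0∞)
    (hM : ∀ z, ∫⁻ t in Set.Icc 0 (L+1), H (z + t • u) ≤ M) :
    ∫⁻ x in tube q u L, H x ≤ volume (Metric.closedBall (0 : EuclideanSpace ℝ (Fin n)) 2) * M := by
  set S : Set (EuclideanSpace ℝ (Fin n) × ℝ) := {z | dist z.1 (q + z.2 • u) ≤ 2} with hS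
  have hSm : MeasurableSet S := by
    apply IsClosed.measurableSet
    exact isClosed_le (by fun_prop) continuous_const
  have h1 : ∀ x ∈ tube q u L, H x ≤ ∫⁻ t in Set.Icc 0 (L+1), S.indicator (fun z => H z.1) (x, t) := by
    intro x hx
    obtain ⟨τ, h0, h1, h2⟩ := (mem_tube hL).mp hx
    calc H x = ∫⁻ t in Set.Icc τ (τ+1), H x := by simp
      _ = ∫⁻ t in Set.Icc τ (τ+1), S.indicator (fun z => H z.1) (x, t) := by
          apply setLIntegral_congr_fun measurableSet_Icc
          intro t ht
          have : (x, t) ∈ S := by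
            simp only [hS, Set.mem_ofPred_eq]
            have h3 : dist (q + τ • u) (q + t • u) ≤ 1 := by
              rw [dist_add_left, dist_eq_norm, ← sub_smul, norm_smul, hu, mul_one, Real.norm_eq_abs, abs_le]
              constructor <;> linarith [ht.1, ht.2]
            linarith [dist_triangle x (q + τ • u) (q + t • u)]
          simp [Set.indicator_of_mem this]
      _ ≤ _ := lintegral_mono_set (Set.Icc_subset_Icc h0 (by linarith))
  have hmeas : Measurable (S.indicator (fun z : EuclideanSpace ℝ (Fin n) × ℝ => H z.1)) :=
    (hH.comp measurable_fst).indicator hSm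
  calc ∫⁻ x in tube q u L, H x
      ≤ ∫⁻ x in tube q u L, ∫⁻ t in Set.Icc 0 (L+1), S.indicator (fun z => H z.1) (x, t) :=
        setLIntegral_mono' (tube_closed q u L).measurableSet h1
    _ ≤ ∫⁻ x, ∫⁻ t in Set.Icc 0 (L+1), S.indicator (fun z => H z.1) (x, t) := setLIntegral_le_lintegral _ _
    _ = ∫⁻ t in Set.Icc 0 (L+1), ∫⁻ x, S.indicator (fun z => H z.1) (x, t) :=
        lintegral_lintegral_swap hmeas.aemeasurable
    _ = ∫⁻ t in Set.Icc 0 (L+1), ∫⁻ z in Metric.closedBall q 2, H (z + t • u) := by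
        apply lintegral_congr
        intro t
        rw [← lintegral_indicator Metric.isClosed_closedBall.measurableSet,
          ← lintegral_add_right_eq_self _ (t • u)]
        apply lintegral_congr
        intro z
        have : (z + t • u, t) ∈ S ↔ z ∈ Metric.closedBall q 2 := by
          simp [hS]
        by_cases hz : z ∈ Metric.closedBall q 2
        · rw [Set.indicator_of_mem (this.mpr hz), Set.indicator_of_mem hz]
        · rw [Set.indicator_of_notMem (fun h => hz (this.mp h)), Set.indicator_of_notMem hz]
    _ = ∫⁻ z in Metric.closedBall q 2, ∫⁻ t in Set.Icc 0 (L+1), H (z + t • u) := by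
        apply lintegral_lintegral_swap
        apply Measurable.aemeasurable
        apply hH.comp
        fun_prop
    _ ≤ ∫⁻ z in Metric.closedBall q 2, M := lintegral_mono hM
    _ = _ := by
        rw [setLIntegral_const, mul_comm, Measure.addHaar_closedBall_center]

theorem tube_vol (q u : EuclideanSpace ℝ (Fin n)) (hu : ‖u‖ = 1) (L : ℝ) (hL : 0 ≤ L) :
    ENNReal.ofReal L * volume (Metric.closedBall (0 : EuclideanSpace ℝ (Fin n)) 1) ≤ 2 * volume (tube q u L) := by
  set S : Set (EuclideanSpace ℝ (Fin n) × ℝ) := {z | dist z.1 (q + z.2 • u) ≤ 1} with hS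
  have hSm : MeasurableSet S := by
    apply IsClosed.measurableSet
    exact isClosed_le (by fun_prop) continuous_const
  have hmeas : Measurable (S.indicator (fun _ => (1:ℝ≥0∞))) := measurable_const.indicator hSm
  calc ENNReal.ofReal L * volume (Metric.closedBall (0 : EuclideanSpace ℝ (Fin n)) 1)
      = ∫⁻ t in Set.Icc 0 L, volume (Metric.closedBall (q + t • u) 1) := by
        simp only [Measure.addHaar_closedBall_center, setLIntegral_const, Real.volume_Icc, sub_zero]
        rw [mul_comm]
    _ = ∫⁻ t in Set.Icc 0 L, ∫⁻ x, S.indicator (fun _ => (1:ℝ≥0∞)) (x, t) := by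
        apply lintegral_congr
        intro t
        rw [← setLIntegral_one, ← lintegral_indicator Metric.isClosed_closedBall.measurableSet]
        rfl
    _ = ∫⁻ x, ∫⁻ t in Set.Icc 0 L, S.indicator (fun _ => (1:ℝ≥0∞)) (x, t) :=
        (lintegral_lintegral_swap (f := fun x t => S.indicator (fun _ => (1:ℝ≥0∞)) (x, t)) hmeas.aemeasurable).symm
    _ ≤ ∫⁻ x, (tube q u L).indicator (fun _ => 2) x := by
        apply lintegral_mono
        intro x
        dsimp only
        by_cases hx : x ∈ tube q u L
        · rw [Set.indicator_of_mem hx]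
          set c : ℝ := inner ℝ (x - q) u with hc
          calc ∫⁻ t in Set.Icc 0 L, S.indicator (fun _ => (1:ℝ≥0∞)) (x, t)
              ≤ ∫⁻ t, S.indicator (fun _ => (1:ℝ≥0∞)) (x, t) := setLIntegral_le_lintegral _ _
            _ ≤ ∫⁻ t, (Set.Icc (c-1) (c+1)).indicator (fun _ => (1:ℝ≥0∞)) t := by
                apply lintegral_mono
                intro t
                dsimp only
                by_cases ht : (x, t) ∈ S
                · have : t ∈ Set.Icc (c-1) (c+1) := by
                    have h1 : ‖x - (q + t • u)‖ ≤ 1 := by rw [← dist_eq_norm]; exact ht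
                    have h2 : |inner ℝ (x - (q + t • u)) u| ≤ 1 := by
                      refine (abs_real_inner_le_norm _ _).trans ?_
                      rw [hu, mul_one]; exact h1
                    have h3 : inner ℝ (x - (q + t • u)) u = c - t := by
                      rw [← sub_sub, inner_sub_left, inner_smul_left, real_inner_self_eq_norm_sq, hu]
                      simp [hc]
                    rw [h3, abs_le] at h2
                    constructor <;> linarith [h2.1, h2.2]
                  rw [Set.indicator_of_mem ht, Set.indicator_of_mem this]
                · rw [Set.indicator_of_notMem ht]; exact zero_le
            _ = 2 := by
                rw [lintegral_indicator measurableSet_Icc, setLIntegral_const, Real.volume_Icc]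
                norm_num
        · rw [Set.indicator_of_notMem hx]
          apply le_of_eq
          apply setLIntegral_eq_zero measurableSet_Icc
          intro t ht
          have : (x, t) ∉ S := fun h => hx ((mem_tube hL).mpr ⟨t, ht.1, ht.2, h⟩)
          simp [Set.indicator_of_notMem this]
    _ = _ := by
        rw [lintegral_indicator (tube_closed q u L).measurableSet, setLIntegral_const]

end tubes


section package

/-- polynomial of degree at most `m` along every line -/
def LP {V : Type*} [AddCommGroup V] [Module ℝ V] (m : ℕ) (g : V → ℝ) : Prop :=
  ∀ y u : V, ∃ P : Polynomial ℝ, P.natDegree ≤ m ∧ ∀ t : ℝ, P.eval t = g (y + t • u)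

theorem LP.const_mul {V : Type*} [AddCommGroup V] [Module ℝ V] {m : ℕ} {g : V → ℝ} (h : LP m g) (c : ℝ) :
    LP m (fun y => c * g y) := by
  intro y u
  obtain ⟨P, h1, h2⟩ := h y u
  exact ⟨Polynomial.C c * P, (Polynomial.natDegree_C_mul_le _ _).trans h1, fun t => by simp [h2]⟩

theorem LP.sum {V ι : Type*} [AddCommGroup V] [Module ℝ V] {m : ℕ} (s : Finset ι) {g : ι → V → ℝ}
    (h : ∀ i, LP m (g i)) : LP m (fun y => ∑ i ∈ s, g i y) := by
  intro y u
  choose P h1 h2 using fun i => h i y u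
  refine ⟨∑ i ∈ s, P i, Polynomial.natDegree_sum_le_of_forall_le _ _ (fun i _ => h1 i), fun t => ?_⟩
  rw [Polynomial.eval_finsetSum]
  exact Finset.sum_congr rfl fun i _ => h2 i t

theorem LP.sq {V : Type*} [AddCommGroup V] [Module ℝ V] {m : ℕ} {g : V → ℝ} (h : LP m g) :
    LP (2 * m) (fun y => g y ^ 2) := by
  intro y u
  obtain ⟨P, h1, h2⟩ := h y u
  refine ⟨P ^ 2, Polynomial.natDegree_pow_le.trans (by omega), fun t => by simp [h2]⟩

variable {n : ℕ}

/-- monomial map -/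
noncomputable def Em (n d : ℕ) (x : EuclideanSpace ℝ (Fin n)) (α : Fin n → Fin (d+1)) : ℝ :=
  ∏ i, x i ^ (α i : ℕ)

theorem Em_LP (d : ℕ) (α : Fin n → Fin (d+1)) : LP (n * d) (fun x => Em n d x α) := by
  intro y u
  refine ⟨∏ i, (Polynomial.C (y i) + Polynomial.X * Polynomial.C (u i)) ^ (α i : ℕ), ?_, ?_⟩
  · refine (Polynomial.natDegree_prod_le _ _).trans ?_
    calc ∑ i : Fin n, ((Polynomial.C (y i) + Polynomial.X * Polynomial.C (u i)) ^ (α i : ℕ)).natDegree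
        ≤ ∑ i : Fin n, d := by
          apply Finset.sum_le_sum
          intro i _
          refine Polynomial.natDegree_pow_le.trans ?_
          have h1 : (Polynomial.C (y i) + Polynomial.X * Polynomial.C (u i)).natDegree ≤ 1 := by
            compute_degree
          have h2 : (α i : ℕ) ≤ d := Nat.lt_succ_iff.mp (α i).2
          calc _ ≤ (α i : ℕ) * 1 := Nat.mul_le_mul_left _ h1
            _ ≤ d := by omega
      _ = n * d := by simp
  · intro t
    simp only [Em, Polynomial.eval_prod]
    exact Finset.prod_congr rfl fun i _ => by simp; ring

theorem Em_contDiff (d : ℕ) (α : Fin n → Fin (d+1)) : ContDiff ℝ 1 (fun x => Em n d x α) := by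
  unfold Em
  fun_prop

theorem Em_null (d : ℕ) (c : (Fin n → Fin (d+1)) → ℝ) (hc : c ≠ 0) :
    volume {x : EuclideanSpace ℝ (Fin n) | ∑ α, c α * Em n d x α = 0} = 0 := by
  have h := null_poly d n c hc
  have hm : MeasurableSet {x : Fin n → ℝ | ∑ α, c α * ∏ i, x i ^ (α i : ℕ) = 0} := by
    apply IsClosed.measurableSet
    exact isClosed_eq (by fun_prop) continuous_const
  have := (PiLp.volume_preserving_ofLp (Fin n)).measure_preimage hm.nullMeasurableSet
  rw [h] at this
  exact this

theorem package : ∃ C0 : ℝ, 0 < C0 ∧ ∀ (n d : ℕ) (X : Set (EuclideanSpace ℝ (Fin n))), IsCompact X →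
    0 < volume.real X → ∃ (D : ℕ) (s : (Fin D → Fin 6) → EuclideanSpace ℝ (Fin n) → ℝ)
      (ρ : EuclideanSpace ℝ (Fin n) → EuclideanSpace ℝ (Fin n) → ℝ),
      (∀ ω, ContDiff ℝ 1 (s ω)) ∧
      (∀ y z, 1 ≤ 2 * ρ y z + C0 * ex (fun ω => |s ω y - s ω z|)) ∧
      (∀ y z, 0 ≤ ρ y z) ∧ Continuous (Function.uncurry ρ) ∧
      (∀ y, ∫ z in X, ρ y z ≤ 4 * (volume.real X / ((d:ℝ) + 1) ^ n)) ∧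
      (∀ ω y u (a b : ℝ), a ≤ b → ∫ t in a..b, |fderiv ℝ (s ω) (y + t • u) u| ≤ 4 * ((n * d : ℕ) : ℝ) + 1) := by
  obtain ⟨C0, hC0, hmom⟩ := moment_main
  refine ⟨C0, hC0, fun n d X hX hN => ?_⟩
  have hEc : Continuous (Em n d) := continuous_pi fun α => (Em_contDiff d α).continuous
  obtain ⟨B, hB, hiso⟩ := isotropy volume X hX hN (Em n d) hEc 0 (fun x => by simp [Em]) (fun v hv => Em_null d v hv)
  have hq : ∀ x, 0 < qf (Em n d) B x := qf_pos _ 0 (fun x => by simp [Em]) B hB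
  set q := qf (Em n d) B with hqdef
  set D := Fintype.card (Fin n → Fin (d+1)) with hD
  let e : (Fin n → Fin (d+1)) ≃ Fin D := Fintype.equivFin _
  let f : Fin D → EuclideanSpace ℝ (Fin n) → ℝ := fun k x => B.mulVec (Em n d x) (e.symm k)
  have hfq : ∀ x, q x = ∑ k, f k x ^ 2 := fun x =>
    ((e.symm.sum_comp (fun j => (B.mulVec (Em n d x) j) ^ 2))).symm
  have hfLP : ∀ k, LP (n * d) (f k) := fun k => by
    have : f k = fun x => ∑ α, B (e.symm k) α * Em n d x α := by
      funext x; simp [f, Matrix.mulVec, dotProduct]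
    rw [this]
    exact LP.sum _ fun α => (Em_LP d α).const_mul _
  have hfC : ∀ k, ContDiff ℝ 1 (f k) := fun k => by
    have : f k = fun x => ∑ α, B (e.symm k) α * Em n d x α := by
      funext x; simp [f, Matrix.mulVec, dotProduct]
    rw [this]
    exact ContDiff.sum fun α _ => contDiff_const.mul (Em_contDiff d α)
  have hqC : ContDiff ℝ 1 q := by
    rw [show q = fun x => ∑ k, f k x ^ 2 from funext hfq]
    exact ContDiff.sum fun k _ => (hfC k).pow 2
  have hqLP : LP (2 * (n * d)) q := by
    rw [show q = fun x => ∑ k, f k x ^ 2 from funext hfq]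
    exact LP.sum _ fun k => (hfLP k).sq
  let g : (Fin D → Fin 6) → EuclideanSpace ℝ (Fin n) → ℝ := fun ω x => ∑ k, sv (ω k) * f k x
  have hgC : ∀ ω, ContDiff ℝ 1 (g ω) := fun ω => ContDiff.sum fun k _ => contDiff_const.mul (hfC k)
  have hgLP : ∀ ω, LP (n * d) (g ω) := fun ω => LP.sum _ fun k => (hfLP k).const_mul _
  have hden : ∀ ω x, 0 < q x + g ω x ^ 2 := fun ω x => add_pos_of_pos_of_nonneg (hq x) (sq_nonneg _)
  have hsC : ∀ ω, ContDiff ℝ 1 (fun x => g ω x ^ 2 / (q x + g ω x ^ 2)) := fun ω =>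
    ((hgC ω).pow 2).div (hqC.add ((hgC ω).pow 2)) (fun x => (hden ω x).ne')
  refine ⟨D, fun ω x => g ω x ^ 2 / (q x + g ω x ^ 2),
    fun y z => (∑ k, f k y * f k z) ^ 2 / (q y * q z), hsC, ?_, ?_, ?_, ?_, ?_⟩
  · intro y z
    have hunit : ∀ x, ∑ k, (f k x / √(q x)) ^ 2 = 1 := fun x => by
      simp only [div_pow, Real.sq_sqrt (hq x).le]
      rw [← Finset.sum_div, ← hfq, div_self (hq x).ne']
    have h1 := hmom D (fun k => f k y / √(q y)) (fun k => f k z / √(q z)) (hunit y) (hunit z)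
    have h2 : (∑ k, f k y / √(q y) * (f k z / √(q z))) ^ 2 = (∑ k, f k y * f k z) ^ 2 / (q y * q z) := by
      have : ∑ k, f k y / √(q y) * (f k z / √(q z)) = (∑ k, f k y * f k z) / (√(q y) * √(q z)) := by
        rw [Finset.sum_div]
        exact Finset.sum_congr rfl fun k _ => by rw [div_mul_div_comm]
      rw [this, div_pow, mul_pow, Real.sq_sqrt (hq y).le, Real.sq_sqrt (hq z).le]
    have h3 : ∀ x ω, lin (fun k => f k x / √(q x)) ω ^ 2 / (1 + lin (fun k => f k x / √(q x)) ω ^ 2)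
        = g ω x ^ 2 / (q x + g ω x ^ 2) := by
      intro x ω
      have : lin (fun k => f k x / √(q x)) ω = g ω x / √(q x) := by
        simp only [lin, g]
        rw [Finset.sum_div]
        exact Finset.sum_congr rfl fun k _ => by ring
      rw [this, div_pow, Real.sq_sqrt (hq x).le]
      have := hq x
      have := hden ω x
      field_simp
    rw [h2] at h1
    simp only [h3] at h1
    exact h1
  · intro y z
    exact div_nonneg (sq_nonneg _) (mul_pos (hq y) (hq z)).le
  · apply Continuous.div
    · have := fun k => (hfC k).continuous
      fun_prop
    · have := hqC.continuous
      fun_prop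
    · rintro ⟨y, z⟩
      exact (mul_pos (hq y) (hq z)).ne'
  · intro y
    have h1 := hiso (fun j => B.mulVec (Em n d y) j / √(q y)) (by
      simp only [div_pow, Real.sq_sqrt (hq y).le]
      rw [← Finset.sum_div]
      exact div_self (hq y).ne')
    have h2 : (Fintype.card (Fin n → Fin (d+1)) : ℝ) = ((d:ℝ) + 1) ^ n := by simp
    rw [← h2]
    refine le_trans (le_of_eq ?_) h1
    apply integral_congr_ae
    filter_upwards with z
    have h3 : ∑ j, B.mulVec (Em n d y) j / √(q y) * B.mulVec (Em n d z) j = (∑ k, f k y * f k z) / √(q y) := by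
      rw [Finset.sum_div, ← e.symm.sum_comp]
      exact Finset.sum_congr rfl fun k _ => by simp only [f]; ring
    rw [h3, div_pow, Real.sq_sqrt (hq y).le, div_div]
  · intro ω y u a b hab
    obtain ⟨P, hP1, hP2⟩ := hgLP ω y u
    obtain ⟨R, hR1, hR2⟩ := hqLP y u
    refine variation_rat (n * d) P R hP1 hR1 (fun t => by rw [hR2]; exact hq _)
      (fun t => g ω (y + t • u) ^ 2 / (q (y + t • u) + g ω (y + t • u) ^ 2)) _
      (fun t => by rw [hP2, hR2]) ?_ ?_ a b hab
    · intro t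
      have h1 := ((hsC ω).differentiable one_ne_zero (y + t • u)).hasFDerivAt
      have h2 : HasDerivAt (fun t : ℝ => y + t • u) u t := by
        simpa using ((hasDerivAt_id t).smul_const u).const_add y
      exact h1.comp_hasDerivAt t h2
    · have := (hsC ω).continuous_fderiv one_ne_zero
      fun_prop

end package


section vol
variable {n D : ℕ}

theorem swap_cont {V W : Type*} [MetricSpace V] [MeasurableSpace V] [BorelSpace V] [SecondCountableTopology V]
    [MetricSpace W] [MeasurableSpace W] [BorelSpace W] [SecondCountableTopology W]
    (μ : Measure V) (ν : Measure W) [SigmaFinite μ] [SigmaFinite ν] [IsFiniteMeasureOnCompacts μ] [IsFiniteMeasureOnCompacts ν]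
    (f : V → W → ℝ) (hf : Continuous (Function.uncurry f)) (A : Set V) (B : Set W) (hA : IsCompact A)
    (hB : IsCompact B) : ∫ x in A, ∫ t in B, f x t ∂ν ∂μ = ∫ t in B, ∫ x in A, f x t ∂μ ∂ν := by
  apply integral_integral_swap
  rw [Measure.prod_restrict]
  exact hf.continuousOn.integrableOn_compact (hA.prod hB)

/-- directional variation in the unit ball -/
noncomputable def Gs (s : (Fin D → Fin 6) → EuclideanSpace ℝ (Fin n) → ℝ) (c v : EuclideanSpace ℝ (Fin n)) : ℝ :=
  ex (fun ω => ∫ y in Metric.closedBall c 1, |fderiv ℝ (s ω) y v|)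

theorem fd_cont {f : EuclideanSpace ℝ (Fin n) → ℝ} (hf : ContDiff ℝ 1 f) :
    Continuous (fun z : EuclideanSpace ℝ (Fin n) × EuclideanSpace ℝ (Fin n) => |fderiv ℝ f z.1 z.2|) := by
  have := hf.continuous_fderiv one_ne_zero
  fun_prop

theorem fd_int {f : EuclideanSpace ℝ (Fin n) → ℝ} (hf : ContDiff ℝ 1 f) (A : Set (EuclideanSpace ℝ (Fin n)))
    (hA : IsCompact A) (v : EuclideanSpace ℝ (Fin n)) : IntegrableOn (fun y => |fderiv ℝ f y v|) A := by
  apply ContinuousOn.integrableOn_compact hA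
  have := hf.continuous_fderiv one_ne_zero
  fun_prop


theorem Gs_nonneg (s : (Fin D → Fin 6) → EuclideanSpace ℝ (Fin n) → ℝ)
    (c : EuclideanSpace ℝ (Fin n)) (v : EuclideanSpace ℝ (Fin n)) : 0 ≤ Gs s c v := by
  unfold Gs ex
  exact Finset.sum_nonneg fun ω _ => mul_nonneg (by positivity) (integral_nonneg fun _ => abs_nonneg _)

theorem Gs_smul (s : (Fin D → Fin 6) → EuclideanSpace ℝ (Fin n) → ℝ)
    (c : EuclideanSpace ℝ (Fin n)) (a : ℝ) (v : EuclideanSpace ℝ (Fin n)) : Gs s c (a • v) = |a| * Gs s c v := by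
  unfold Gs
  rw [← ex_mul]
  congr 1
  funext ω
  rw [← integral_const_mul]
  simp [abs_mul]

theorem Gs_add (s : (Fin D → Fin 6) → EuclideanSpace ℝ (Fin n) → ℝ)
    (hs : ∀ ω, ContDiff ℝ 1 (s ω))
    (c : EuclideanSpace ℝ (Fin n)) (v w : EuclideanSpace ℝ (Fin n)) : Gs s c (v + w) ≤ Gs s c v + Gs s c w := by
  unfold Gs
  rw [← ex_add]
  apply ex_mono
  intro ω
  rw [← integral_add (fd_int (hs ω) _ (isCompact_closedBall c 1) v) (fd_int (hs ω) _ (isCompact_closedBall c 1) w)]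
  apply integral_mono (fd_int (hs ω) _ (isCompact_closedBall c 1) _)
    ((fd_int (hs ω) _ (isCompact_closedBall c 1) v).add (fd_int (hs ω) _ (isCompact_closedBall c 1) w))
  intro y
  simp only [map_add]
  exact abs_add_le _ _

theorem Gs_cont (s : (Fin D → Fin 6) → EuclideanSpace ℝ (Fin n) → ℝ)
    (hs : ∀ ω, ContDiff ℝ 1 (s ω))
    (c : EuclideanSpace ℝ (Fin n)) : Continuous (Gs s c) := by
  unfold Gs ex
  refine continuous_finsetSum _ fun ω _ => continuous_const.mul ?_
  have h := fd_cont (hs ω)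
  apply continuous_parametric_integral_of_continuous (f := fun v y => |fderiv ℝ (s ω) y v|) ?_ (isCompact_closedBall c 1)
  exact h.comp continuous_swap

/-- the body -/
def Kb (s : (Fin D → Fin 6) → EuclideanSpace ℝ (Fin n) → ℝ)
    (c : EuclideanSpace ℝ (Fin n)) (R η : ℝ) : Set (EuclideanSpace ℝ (Fin n)) := {v | ‖v‖ ≤ R ∧ Gs s c v ≤ η}

theorem Kb_compact (s : (Fin D → Fin 6) → EuclideanSpace ℝ (Fin n) → ℝ)
    (hs : ∀ ω, ContDiff ℝ 1 (s ω))
    (c : EuclideanSpace ℝ (Fin n)) (R η : ℝ) : IsCompact (Kb s c R η) := by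
  have h1 : IsClosed (Kb s c R η) :=
    (isClosed_le continuous_norm continuous_const).inter (isClosed_le (Gs_cont s hs c) continuous_const)
  refine (isCompact_closedBall (0 : EuclideanSpace ℝ (Fin n)) R).of_isClosed_subset h1 ?_
  intro v hv
  simpa using hv.1

theorem Kb_convex (s : (Fin D → Fin 6) → EuclideanSpace ℝ (Fin n) → ℝ)
    (hs : ∀ ω, ContDiff ℝ 1 (s ω))
    (c : EuclideanSpace ℝ (Fin n)) (R η : ℝ) : Convex ℝ (Kb s c R η) := by
  intro v hv w hw a b ha hb hab
  refine ⟨?_, ?_⟩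
  · calc ‖a • v + b • w‖ ≤ a * ‖v‖ + b * ‖w‖ := by
          refine (norm_add_le _ _).trans ?_
          rw [norm_smul, norm_smul, Real.norm_of_nonneg ha, Real.norm_of_nonneg hb]
      _ ≤ a * R + b * R := add_le_add (mul_le_mul_of_nonneg_left hv.1 ha) (mul_le_mul_of_nonneg_left hw.1 hb)
      _ = R := by rw [← add_mul, hab, one_mul]
  · calc Gs s c (a • v + b • w) ≤ a * Gs s c v + b * Gs s c w := by
          refine (Gs_add s hs c _ _).trans ?_
          rw [Gs_smul, Gs_smul, abs_of_nonneg ha, abs_of_nonneg hb]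
      _ ≤ a * η + b * η := add_le_add (mul_le_mul_of_nonneg_left hv.2 ha) (mul_le_mul_of_nonneg_left hw.2 hb)
      _ = η := by rw [← add_mul, hab, one_mul]

theorem Kb_symm (s : (Fin D → Fin 6) → EuclideanSpace ℝ (Fin n) → ℝ)
    (c : EuclideanSpace ℝ (Fin n)) (R η : ℝ) (y : EuclideanSpace ℝ (Fin n)) : y ∈ Kb s c R η ↔ -y ∈ Kb s c R η := by
  have h : Gs s c (-y) = Gs s c y := by
    have := Gs_smul s c (-1) y
    simpa using this
  simp only [Kb, Set.mem_ofPred_eq, norm_neg, h]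

theorem Kb_interior (s : (Fin D → Fin 6) → EuclideanSpace ℝ (Fin n) → ℝ)
    (hs : ∀ ω, ContDiff ℝ 1 (s ω))
    (c : EuclideanSpace ℝ (Fin n)) (R η : ℝ) (hR : 0 < R) (hη : 0 < η) : (interior (Kb s c R η)).Nonempty := by
  refine ⟨0, ?_⟩
  rw [mem_interior]
  refine ⟨{v | ‖v‖ < R ∧ Gs s c v < η}, fun v hv => ⟨hv.1.le, hv.2.le⟩,
    (isOpen_lt continuous_norm continuous_const).inter (isOpen_lt (Gs_cont s hs c) continuous_const), ?_, ?_⟩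
  · simpa using hR
  · have := Gs_smul s c 0 0
    simp only [zero_smul, abs_zero, zero_mul] at this
    rw [this]; exact hη

theorem transl {f : EuclideanSpace ℝ (Fin n) → ℝ} (hf : ContDiff ℝ 1 f) (c v : EuclideanSpace ℝ (Fin n))
    (hv : ‖v‖ ≤ 1/2) : ∫ y in Metric.closedBall c (1/2), |f y - f (y + v)| ≤
      ∫ y in Metric.closedBall c 1, |fderiv ℝ f y v| := by
  have hfd := hf.continuous_fderiv one_ne_zero
  have hcf := hf.continuous
  have hcont : Continuous (Function.uncurry fun (y : EuclideanSpace ℝ (Fin n)) (t : ℝ) => |fderiv ℝ f (y + t • v) v|) := by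
    simp only [Function.uncurry_def]
    fun_prop
  have h1 : ∀ y, |f y - f (y + v)| ≤ ∫ t in Set.Icc (0:ℝ) 1, |fderiv ℝ f (y + t • v) v| := by
    intro y
    have hd : ∀ t : ℝ, HasDerivAt (fun t : ℝ => f (y + t • v)) (fderiv ℝ f (y + t • v) v) t := by
      intro t
      have h1 := (hf.differentiable one_ne_zero (y + t • v)).hasFDerivAt
      have h2 : HasDerivAt (fun t : ℝ => y + t • v) v t := by
        simpa using ((hasDerivAt_id t).smul_const v).const_add y
      exact h1.comp_hasDerivAt t h2
    have hi : Continuous (fun t : ℝ => fderiv ℝ f (y + t • v) v) := by fun_prop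
    have h2 := intervalIntegral.integral_eq_sub_of_hasDerivAt (fun t _ => hd t) (hi.intervalIntegrable 0 1)
    rw [integral_Icc_eq_integral_Ioc, ← intervalIntegral.integral_of_le zero_le_one]
    have h3 := intervalIntegral.abs_integral_le_integral_abs (f := fun t : ℝ => fderiv ℝ f (y + t • v) v) (μ := volume) (zero_le_one (α := ℝ))
    rw [h2] at h3
    simp only [one_smul, zero_smul, add_zero] at h3
    rw [abs_sub_comm]
    exact h3
  have hab : Continuous fun y => |f y - f (y+v)| := by fun_prop
  have hB := isCompact_closedBall c (1/2)
  calc ∫ y in Metric.closedBall c (1/2), |f y - f (y + v)|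
      ≤ ∫ y in Metric.closedBall c (1/2), ∫ t in Set.Icc (0:ℝ) 1, |fderiv ℝ f (y + t • v) v| := by
        apply integral_mono (hab.continuousOn.integrableOn_compact hB) _ h1
        exact (continuous_parametric_integral_of_continuous hcont isCompact_Icc).continuousOn.integrableOn_compact hB
    _ = ∫ t in Set.Icc (0:ℝ) 1, ∫ y in Metric.closedBall c (1/2), |fderiv ℝ f (y + t • v) v| :=
        swap_cont _ _ _ hcont _ _ hB isCompact_Icc
    _ ≤ ∫ t in Set.Icc (0:ℝ) 1, ∫ y in Metric.closedBall c 1, |fderiv ℝ f y v| := by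
        apply setIntegral_mono_on _ (by simp) measurableSet_Icc
        · intro t ht
          have hp := (measurePreserving_add_right (volume : Measure (EuclideanSpace ℝ (Fin n))) (t • v))
          rw [← hp.setIntegral_preimage_emb (MeasurableEquiv.addRight (t • v)).measurableEmbedding (fun y => |fderiv ℝ f y v|) (Metric.closedBall c 1)]
          apply setIntegral_mono_set
          · have : Continuous fun y => |fderiv ℝ f (y + t • v) v| := by fun_prop
            apply this.continuousOn.integrableOn_compact
            have : (fun x => x + t • v) ⁻¹' Metric.closedBall c 1 = Metric.closedBall (c - t • v) 1 := by
              ext x; simp [dist_eq_norm, add_sub_assoc, sub_sub_eq_add_sub]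
            rw [this]
            exact isCompact_closedBall _ _
          · exact Filter.Eventually.of_forall fun _ => abs_nonneg _
          · apply LE.le.eventuallyLE
            intro y hy
            simp only [Set.mem_preimage, Metric.mem_closedBall, dist_eq_norm] at hy ⊢
            have h1 : ‖t • v‖ ≤ 1/2 := by
              rw [norm_smul, Real.norm_of_nonneg ht.1]
              nlinarith [norm_nonneg v, ht.1, ht.2]
            calc ‖y + t • v - c‖ = ‖(y - c) + t • v‖ := by congr 1; abel
              _ ≤ _ := norm_add_le _ _
              _ ≤ 1 := by linarith
        · exact (continuous_parametric_integral_of_continuous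
            (f := fun (t : ℝ) (y : EuclideanSpace ℝ (Fin n)) => |fderiv ℝ f (y + t • v) v|)
            (hcont.comp continuous_swap) hB).continuousOn.integrableOn_compact isCompact_Icc
    _ = _ := by simp

theorem K1_vol (s : (Fin D → Fin 6) → EuclideanSpace ℝ (Fin n) → ℝ)
    (hs : ∀ ω, ContDiff ℝ 1 (s ω))
    (c : EuclideanSpace ℝ (Fin n)) (C0 ε Q : ℝ) (hC0 : 0 < C0) (hε : 0 < ε) (X : Set (EuclideanSpace ℝ (Fin n))) (hX : IsCompact X)
    (hcX : Metric.closedBall c 1 ⊆ X)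
    (ρ : EuclideanSpace ℝ (Fin n) → EuclideanSpace ℝ (Fin n) → ℝ)
    (h1 : ∀ y z, 1 ≤ 2 * ρ y z + C0 * ex (fun ω => |s ω y - s ω z|))
    (h2 : ∀ y z, 0 ≤ ρ y z) (h3 : Continuous (Function.uncurry ρ))
    (h4 : ∀ y, ∫ z in X, ρ y z ≤ Q)
    (hεβ : C0 * ε = volume.real (Metric.closedBall (0 : EuclideanSpace ℝ (Fin n)) (1/2)) / 2) :
    volume.real (Kb s c (1/2) ε) ≤ 4 * Q := by
  set β := volume.real (Metric.closedBall (0 : EuclideanSpace ℝ (Fin n)) (1/2)) with hβ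
  have hβc : volume.real (Metric.closedBall c (1/2)) = β := by
    rw [hβ, measureReal_def, measureReal_def, Measure.addHaar_closedBall_center]
  have hβ0 : 0 < β := by nlinarith
  have hB := isCompact_closedBall c (1/2)
  have hK := Kb_compact s hs c (1/2) ε
  have hcρ : Continuous (Function.uncurry fun (v y : EuclideanSpace ℝ (Fin n)) => ρ y (y + v)) := by
    have : Continuous fun z : EuclideanSpace ℝ (Fin n) × EuclideanSpace ℝ (Fin n) => (z.2, z.2 + z.1) := by fun_prop
    exact h3.comp this
  have hstep : ∀ v ∈ Kb s c (1/2) ε, β / 4 ≤ ∫ y in Metric.closedBall c (1/2), ρ y (y + v) := by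
    intro v hv
    have hi1 : IntegrableOn (fun y => ρ y (y + v)) (Metric.closedBall c (1/2)) :=
      (hcρ.comp (Continuous.prodMk_right v)).continuousOn.integrableOn_compact hB
    have hi2 : ∀ ω, IntegrableOn (fun y => |s ω y - s ω (y + v)|) (Metric.closedBall c (1/2)) := fun ω => by
      have := (hs ω).continuous
      have h : Continuous fun y => |s ω y - s ω (y + v)| := by fun_prop
      exact h.continuousOn.integrableOn_compact hB
    have hi3 : IntegrableOn (fun y => ex (fun ω => |s ω y - s ω (y + v)|)) (Metric.closedBall c (1/2)) := by
      unfold ex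
      exact integrable_finsetSum _ fun ω _ => (hi2 ω).const_mul _
    have h5 : ∫ y in Metric.closedBall c (1/2), (1:ℝ) ≤ ∫ y in Metric.closedBall c (1/2),
        (2 * ρ y (y + v) + C0 * ex (fun ω => |s ω y - s ω (y + v)|)) := by
      apply integral_mono _ ((hi1.const_mul 2).add (hi3.const_mul C0)) (fun y => h1 y (y+v))
      exact continuous_const.continuousOn.integrableOn_compact hB
    rw [integral_add (hi1.const_mul 2) (hi3.const_mul C0), integral_const_mul, integral_const_mul] at h5
    have h6 : ∫ y in Metric.closedBall c (1/2), ex (fun ω => |s ω y - s ω (y + v)|) ≤ ε := by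
      refine le_trans ?_ hv.2
      unfold Gs
      have : ∫ y in Metric.closedBall c (1/2), ex (fun ω => |s ω y - s ω (y + v)|) =
          ex (fun ω => ∫ y in Metric.closedBall c (1/2), |s ω y - s ω (y + v)|) := by
        unfold ex
        rw [integral_finsetSum _ fun ω _ => (hi2 ω).const_mul _]
        exact Finset.sum_congr rfl fun ω _ => integral_const_mul _ _
      rw [this]
      exact ex_mono _ _ fun ω => transl (hs ω) c v hv.1
    have h7 : ∫ y in Metric.closedBall c (1/2), (1:ℝ) = β := by
      rw [setIntegral_const, hβc]; simp
    rw [h7] at h5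
    have := mul_le_mul_of_nonneg_left h6 hC0.le
    linarith
  have hA : volume.real (Kb s c (1/2) ε) * (β / 4) ≤ ∫ v in Kb s c (1/2) ε, ∫ y in Metric.closedBall c (1/2), ρ y (y + v) := by
    calc _ = ∫ v in Kb s c (1/2) ε, β / 4 := by simp
      _ ≤ _ := by
        apply setIntegral_mono_on (continuous_const.continuousOn.integrableOn_compact hK) _ hK.measurableSet hstep
        exact (continuous_parametric_integral_of_continuous hcρ hB).continuousOn.integrableOn_compact hK
  have hBd : ∫ v in Kb s c (1/2) ε, ∫ y in Metric.closedBall c (1/2), ρ y (y + v) ≤ β * Q := by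
    rw [swap_cont _ _ _ hcρ _ _ hK hB]
    calc _ ≤ ∫ y in Metric.closedBall c (1/2), Q := by
          apply setIntegral_mono_on _ (continuous_const.continuousOn.integrableOn_compact hB) hB.measurableSet
          · intro y hy
            refine le_trans ?_ (h4 y)
            have hp := (measurePreserving_add_left (volume : Measure (EuclideanSpace ℝ (Fin n))) y)
            rw [← hp.setIntegral_preimage_emb (MeasurableEquiv.addLeft y).measurableEmbedding (fun z => ρ y z) X]
            apply setIntegral_mono_set
            · have : Continuous fun v => ρ y (y + v) := hcρ.comp (Continuous.prodMk_left y)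
              apply this.continuousOn.integrableOn_compact
              exact (Homeomorph.addLeft y).isCompact_preimage.mpr hX
            · exact Filter.Eventually.of_forall fun _ => h2 _ _
            · apply LE.le.eventuallyLE
              intro v hv
              apply hcX
              simp only [Metric.mem_closedBall, dist_eq_norm] at hy ⊢
              calc ‖y + v - c‖ = ‖(y - c) + v‖ := by congr 1; abel
                _ ≤ _ := norm_add_le _ _
                _ ≤ 1 := by linarith [hv.1]
          · exact (continuous_parametric_integral_of_continuous
              (f := fun (y v : EuclideanSpace ℝ (Fin n)) => ρ y (y + v))
              (hcρ.comp continuous_swap) hK).continuousOn.integrableOn_compact hB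
      _ = β * Q := by rw [setIntegral_const, hβc]; simp
  have := hA.trans hBd
  have h9 : β * volume.real (Kb s c (1/2) ε) ≤ β * (4 * Q) := by linarith
  exact le_of_mul_le_mul_left h9 hβ0

end vol


section bad
variable {n D : ℕ}

/-- averaged directional derivative -/
noncomputable def Hs (s : (Fin D → Fin 6) → EuclideanSpace ℝ (Fin n) → ℝ) (v y : EuclideanSpace ℝ (Fin n)) : ℝ := ex (fun ω => |fderiv ℝ (s ω) y v|)

theorem Hs_cont (s : (Fin D → Fin 6) → EuclideanSpace ℝ (Fin n) → ℝ)
    (hs : ∀ ω, ContDiff ℝ 1 (s ω)) (v : EuclideanSpace ℝ (Fin n)) : Continuous (Hs s v) := by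
  unfold Hs ex
  refine continuous_finsetSum _ fun ω _ => continuous_const.mul ?_
  have := (hs ω).continuous_fderiv one_ne_zero
  fun_prop

theorem Hs_nonneg (s : (Fin D → Fin 6) → EuclideanSpace ℝ (Fin n) → ℝ) (v y : EuclideanSpace ℝ (Fin n)) : 0 ≤ Hs s v y := by
  unfold Hs ex
  exact Finset.sum_nonneg fun ω _ => mul_nonneg (by positivity) (abs_nonneg _)

theorem Gs_eq (s : (Fin D → Fin 6) → EuclideanSpace ℝ (Fin n) → ℝ)
    (hs : ∀ ω, ContDiff ℝ 1 (s ω)) (c v : EuclideanSpace ℝ (Fin n)) :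
    ENNReal.ofReal (Gs s c v) = ∫⁻ y in Metric.closedBall c 1, ENNReal.ofReal (Hs s v y) := by
  have hi : IntegrableOn (Hs s v) (Metric.closedBall c 1) :=
    (Hs_cont s hs v).continuousOn.integrableOn_compact (isCompact_closedBall c 1)
  rw [← ofReal_integral_eq_lintegral_ofReal hi (Filter.Eventually.of_forall fun y => Hs_nonneg s v y)]
  congr 1
  unfold Gs Hs ex
  rw [integral_finsetSum _ fun ω _ => (fd_int (hs ω) _ (isCompact_closedBall c 1) v).const_mul _]
  exact Finset.sum_congr rfl fun ω _ => (integral_const_mul _ _).symm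


theorem line_bound (s : (Fin D → Fin 6) → EuclideanSpace ℝ (Fin n) → ℝ)
    (hs : ∀ ω, ContDiff ℝ 1 (s ω))
    (W : ℝ)
    (hW : ∀ ω y u (a b : ℝ), a ≤ b → ∫ t in a..b, |fderiv ℝ (s ω) (y + t • u) u| ≤ W) (u z : EuclideanSpace ℝ (Fin n)) (l : ℝ) (hl : 0 ≤ l) :
    ∫⁻ t in Set.Icc 0 l, ENNReal.ofReal (Hs s u (z + t • u)) ≤ ENNReal.ofReal W := by
  have hc : Continuous fun t : ℝ => Hs s u (z + t • u) := (Hs_cont s hs u).comp (by fun_prop)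
  have hi : IntegrableOn (fun t : ℝ => Hs s u (z + t • u)) (Set.Icc 0 l) :=
    hc.continuousOn.integrableOn_compact isCompact_Icc
  rw [← ofReal_integral_eq_lintegral_ofReal hi (Filter.Eventually.of_forall fun y => Hs_nonneg s u _)]
  apply ENNReal.ofReal_le_ofReal
  have hi2 : ∀ ω, IntegrableOn (fun t : ℝ => |fderiv ℝ (s ω) (z + t • u) u|) (Set.Icc 0 l) := fun ω => by
    have := (hs ω).continuous_fderiv one_ne_zero
    have h : Continuous fun t : ℝ => |fderiv ℝ (s ω) (z + t • u) u| := by fun_prop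
    exact h.continuousOn.integrableOn_compact isCompact_Icc
  calc ∫ t in Set.Icc 0 l, Hs s u (z + t • u) = ex fun ω => ∫ t in Set.Icc 0 l, |fderiv ℝ (s ω) (z + t • u) u| := by
        unfold Hs ex
        rw [integral_finsetSum _ fun ω _ => (hi2 ω).const_mul _]
        exact Finset.sum_congr rfl fun ω _ => (integral_const_mul _ _)
    _ ≤ ex fun _ : Fin D → Fin 6 => W := by
        apply ex_mono
        intro ω
        rw [integral_Icc_eq_integral_Ioc, ← intervalIntegral.integral_of_le hl]
        exact hW ω z u 0 l hl
    _ = W := ex_const W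

theorem Gs_le (s : (Fin D → Fin 6) → EuclideanSpace ℝ (Fin n) → ℝ)
    (hs : ∀ ω, ContDiff ℝ 1 (s ω))
    (W : ℝ)
    (hW : ∀ ω y u (a b : ℝ), a ≤ b → ∫ t in a..b, |fderiv ℝ (s ω) (y + t • u) u| ≤ W) (hW0 : 0 ≤ W) (c e : EuclideanSpace ℝ (Fin n)) :
    Gs s c e ≤ ‖e‖ * (volume.real (Metric.closedBall (0 : EuclideanSpace ℝ (Fin n)) 2) * W) := by
  by_cases he : e = 0
  · subst he
    have := Gs_smul s c 0 0
    simp only [zero_smul, abs_zero, zero_mul] at this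
    simp [this]
  have hne : ‖e‖ ≠ 0 := norm_ne_zero_iff.mpr he
  set u := ‖e‖⁻¹ • e with hu
  have hu1 : ‖u‖ = 1 := by rw [hu, norm_smul, norm_inv, norm_norm, inv_mul_cancel₀ hne]
  have heu : e = ‖e‖ • u := by rw [hu, smul_smul, mul_inv_cancel₀ hne, one_smul]
  have h1 : Gs s c u ≤ volume.real (Metric.closedBall (0 : EuclideanSpace ℝ (Fin n)) 2) * W := by
    rw [← ENNReal.ofReal_le_ofReal_iff (by positivity), Gs_eq s hs, ENNReal.ofReal_mul (by positivity),
      ofReal_measureReal (measure_closedBall_lt_top).ne]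
    refine le_trans (lintegral_mono_set ?_) (tube_lintegral c u hu1 0 le_rfl _
      (Hs_cont s hs u).measurable.ennreal_ofReal _ (fun z => line_bound s hs W hW u z _ (by norm_num)))
    intro y hy
    rw [mem_tube le_rfl]
    exact ⟨0, le_rfl, le_rfl, by simpa using hy⟩
  conv_lhs => rw [heu, Gs_smul, abs_norm]
  exact mul_le_mul_of_nonneg_left h1 (norm_nonneg _)

theorem bad_markov (s : (Fin D → Fin 6) → EuclideanSpace ℝ (Fin n) → ℝ)
    (hs : ∀ ω, ContDiff ℝ 1 (s ω))
    (W : ℝ)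
    (hW : ∀ ω y u (a b : ℝ), a ≤ b → ∫ t in a..b, |fderiv ℝ (s ω) (y + t • u) u| ≤ W) (cc : EuclideanSpace ℝ (Fin n) → EuclideanSpace ℝ (Fin n)) (q u : EuclideanSpace ℝ (Fin n))
    (hu : ‖u‖ = 1) (L : ℝ) (hL : 0 ≤ L) (hcc : ∀ x ∈ tube q u L, dist x (cc x) ≤ 1) (θ : ℝ) :
    ENNReal.ofReal θ * volume {x ∈ tube q u L | θ < Gs s (cc x) u} ≤
      volume (Metric.closedBall (0 : EuclideanSpace ℝ (Fin n)) 2) *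
        (volume (Metric.closedBall (0 : EuclideanSpace ℝ (Fin n)) 2) * ENNReal.ofReal W) := by
  set Hn : EuclideanSpace ℝ (Fin n) → ℝ≥0∞ := fun y => ENNReal.ofReal (Hs s u y) with hHn
  have hHm : Measurable Hn := (Hs_cont s hs u).measurable.ennreal_ofReal
  set Gt : EuclideanSpace ℝ (Fin n) → ℝ≥0∞ := fun x => ∫⁻ w in Metric.closedBall 0 2, Hn (x + w) with hGt
  have hjm : Measurable (fun z : EuclideanSpace ℝ (Fin n) × EuclideanSpace ℝ (Fin n) => Hn (z.1 + z.2)) :=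
    hHm.comp (by fun_prop)
  have hGm : Measurable Gt := hjm.lintegral_prod_right'
  have hTm : MeasurableSet (tube q u L) := (tube_closed q u L).measurableSet
  have hGle : ∀ x ∈ tube q u L, ENNReal.ofReal (Gs s (cc x) u) ≤ Gt x := by
    intro x hx
    rw [Gs_eq s hs]
    have hp := (measurePreserving_add_left (volume : Measure (EuclideanSpace ℝ (Fin n))) x)
    rw [← hp.setLIntegral_comp_preimage_emb (MeasurableEquiv.addLeft x).measurableEmbedding Hn]
    apply lintegral_mono_set
    intro w hw
    simp only [Set.mem_preimage, Metric.mem_closedBall, dist_eq_norm] at hw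
    have h1 := hcc x hx
    rw [dist_eq_norm, norm_sub_rev] at h1
    simp only [Metric.mem_closedBall, dist_zero_right]
    calc ‖w‖ = ‖(x + w - cc x) + (cc x - x)‖ := by congr 1; abel
      _ ≤ _ := norm_add_le _ _
      _ ≤ 2 := by linarith
  calc ENNReal.ofReal θ * volume {x ∈ tube q u L | θ < Gs s (cc x) u}
      ≤ ENNReal.ofReal θ * (volume.restrict (tube q u L)) {x | ENNReal.ofReal θ ≤ Gt x} := by
        refine mul_le_mul' le_rfl ?_
        rw [Measure.restrict_apply' hTm]
        apply measure_mono
        rintro x ⟨hx, hx2⟩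
        exact ⟨(ENNReal.ofReal_le_ofReal hx2.le).trans (hGle x hx), hx⟩
    _ ≤ ∫⁻ x in tube q u L, Gt x := mul_meas_ge_le_lintegral hGm _
    _ = ∫⁻ w in Metric.closedBall 0 2, ∫⁻ x in tube q u L, Hn (x + w) :=
        lintegral_lintegral_swap hjm.aemeasurable
    _ ≤ ∫⁻ w in Metric.closedBall (0 : EuclideanSpace ℝ (Fin n)) 2, volume (Metric.closedBall (0 : EuclideanSpace ℝ (Fin n)) 2) * ENNReal.ofReal W := by
        apply lintegral_mono
        intro w
        apply tube_lintegral q u hu L hL (fun x => Hn (x + w)) (hHm.comp (by fun_prop))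
        intro z
        have := line_bound s hs W hW u (z + w) (L + 1) (by linarith)
        refine le_trans (le_of_eq ?_) this
        apply lintegral_congr
        intro t
        simp only [hHn]
        congr 2
        abel
    _ = _ := by rw [setLIntegral_const, mul_comm]

theorem good_pt (s : (Fin D → Fin 6) → EuclideanSpace ℝ (Fin n) → ℝ)
    (hs : ∀ ω, ContDiff ℝ 1 (s ω))
    (W : ℝ)
    (hW : ∀ ω y u (a b : ℝ), a ≤ b → ∫ t in a..b, |fderiv ℝ (s ω) (y + t • u) u| ≤ W) (hW0 : 0 ≤ W) (c q u x : EuclideanSpace ℝ (Fin n)) (hu : ‖u‖ = 1) (L : ℝ) (hL : 0 ≤ L)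
    (hx : x ∈ tube q u L) (R η σ θ : ℝ) (hσ : 0 < σ) (h1 : L + 2 ≤ σ * R)
    (h2 : L * θ + 2 * (volume.real (Metric.closedBall (0 : EuclideanSpace ℝ (Fin n)) 2) * W) ≤ σ * η)
    (hθ : Gs s c u ≤ θ) : tube q u L ⊆ (fun y => x + σ • y) '' Kb s c R η := by
  intro y hy
  obtain ⟨a, a0, aL, ha⟩ := (mem_tube hL).mp hx
  obtain ⟨b, b0, bL, hb⟩ := (mem_tube hL).mp hy
  set e := (y - (q + b • u)) - (x - (q + a • u)) with he
  have hen : ‖e‖ ≤ 2 := by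
    rw [dist_eq_norm] at ha hb
    exact (norm_sub_le _ _).trans (by linarith)
  have hyx : y - x = (b - a) • u + e := by rw [he, sub_smul]; abel
  have hba : |b - a| ≤ L := by rw [abs_le]; constructor <;> linarith
  have hn1 : ‖y - x‖ ≤ L + 2 := by
    rw [hyx]
    refine (norm_add_le _ _).trans ?_
    rw [norm_smul, hu, mul_one, Real.norm_eq_abs]
    linarith
  have hG : Gs s c (y - x) ≤ σ * η := by
    rw [hyx]
    refine (Gs_add s hs c _ _).trans ?_
    rw [Gs_smul]
    have h3 := Gs_le s hs W hW hW0 c e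
    have h4 : |b - a| * Gs s c u ≤ L * θ := mul_le_mul hba hθ (Gs_nonneg s c u) hL
    have h5 : ‖e‖ * (volume.real (Metric.closedBall (0 : EuclideanSpace ℝ (Fin n)) 2) * W) ≤
      2 * (volume.real (Metric.closedBall (0 : EuclideanSpace ℝ (Fin n)) 2) * W) :=
      mul_le_mul_of_nonneg_right hen (by positivity)
    linarith
  refine ⟨σ⁻¹ • (y - x), ⟨?_, ?_⟩, ?_⟩
  · rw [norm_smul, Real.norm_of_nonneg (by positivity), inv_mul_le_iff₀ hσ]
    linarith
  · rw [Gs_smul, abs_of_nonneg (by positivity), inv_mul_le_iff₀ hσ]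
    exact hG
  · simp [smul_smul, hσ.ne']

end bad


open scoped Pointwise in
theorem K_vol {n D : ℕ} (hn : 1 ≤ n) (s : (Fin D → Fin 6) → EuclideanSpace ℝ (Fin n) → ℝ)
    (hs : ∀ ω, ContDiff ℝ 1 (s ω)) (c : EuclideanSpace ℝ (Fin n)) (d : ℕ) (hd : 1 ≤ d) (ε N : ℝ) (hN : 0 ≤ N)
    (h : volume.real (Kb s c (1/2) ε) ≤ 4 * (4 * (N / ((d:ℝ) + 1) ^ n))) :
    volume.real (Kb s c ((d:ℝ)/32) ((d:ℝ)/16 * ε)) ≤ N := by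
  have hd0 : (0:ℝ) < (d:ℝ)/16 := by positivity
  have hsub : Kb s c ((d:ℝ)/32) ((d:ℝ)/16 * ε) ⊆ ((d:ℝ)/16) • Kb s c (1/2) ε := by
    intro v hv
    rw [Set.mem_smul_set]
    refine ⟨((d:ℝ)/16)⁻¹ • v, ⟨?_, ?_⟩, by rw [smul_smul, mul_inv_cancel₀ hd0.ne', one_smul]⟩
    · rw [norm_smul, Real.norm_of_nonneg (by positivity), inv_mul_le_iff₀ hd0]
      have := hv.1
      linarith
    · rw [Gs_smul, abs_of_nonneg (by positivity), inv_mul_le_iff₀ hd0]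
      exact hv.2
  have hfin : volume (((d:ℝ)/16) • Kb s c (1/2) ε) ≠ ⊤ := ((Kb_compact s hs c (1/2) ε).smul _).measure_lt_top.ne
  have h1 := measureReal_mono hsub hfin
  have h2 : volume.real (((d:ℝ)/16) • Kb s c (1/2) ε) = ((d:ℝ)/16) ^ n * volume.real (Kb s c (1/2) ε) := by
    rw [measureReal_def, Measure.addHaar_smul, ENNReal.toReal_mul, ENNReal.toReal_ofReal (by positivity), finrank_euclideanSpace_fin,
      abs_of_nonneg (by positivity), measureReal_def]
  rw [h2] at h1
  have h3 : ((d:ℝ)/16) ^ n * 16 ≤ ((d:ℝ)+1) ^ n := by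
    rw [div_pow]
    have h16 : (16:ℝ) ≤ 16 ^ n := by
      calc (16:ℝ) = 16 ^ 1 := by norm_num
        _ ≤ 16 ^ n := pow_le_pow_right₀ (by norm_num) hn
    have h5 : (d:ℝ) ^ n ≤ ((d:ℝ)+1) ^ n := by gcongr; linarith
    have h6 : (0:ℝ) ≤ (d:ℝ)^n := by positivity
    rw [div_mul_eq_mul_div, div_le_iff₀ (by positivity)]
    nlinarith
  calc _ ≤ _ := h1
    _ ≤ ((d:ℝ)/16) ^ n * (4 * (4 * (N / ((d:ℝ) + 1) ^ n))) := by gcongr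
    _ = (((d:ℝ)/16) ^ n * 16) * (N / ((d:ℝ) + 1) ^ n) := by ring
    _ ≤ ((d:ℝ)+1) ^ n * (N / ((d:ℝ) + 1) ^ n) := by gcongr
    _ = N := by field_simp

/-- **Box estimate (planiness).** If `X` is a finite union of cylinders of radius 1 and length
`L ≥ C(n)`, then for each `x ∈ X` there is a centrally symmetric convex body `K(x)`, with
`B(x) := x + K(x)` of volume at most `Vol(X)`, such that for every cylinder `T ⊆ X` of radius 1
and length `L` and every `σ > 0`, the set of `x ∈ T` for which `T ⊄ x + σ • K(x)` has measure
at most `C(n) σ⁻¹ Vol(T)`. -/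
theorem box_estimate (n : ℕ) (hn : 2 ≤ n) :
    ∃ C : ℝ, 0 < C ∧
      ∀ (L : ℝ), C ≤ L →
      ∀ (m : ℕ) (p w : Fin m → EuclideanSpace ℝ (Fin n)),
        (∀ i, ‖w i‖ = 1) →
        ∃ K : EuclideanSpace ℝ (Fin n) → Set (EuclideanSpace ℝ (Fin n)),
          (∀ x ∈ ⋃ i, tube (p i) (w i) L,
            Convex ℝ (K x) ∧ IsCompact (K x) ∧ (interior (K x)).Nonempty ∧
            (∀ y, y ∈ K x ↔ -y ∈ K x) ∧
            volume ((fun y => x + y) '' K x) ≤ volume (⋃ i, tube (p i) (w i) L)) ∧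
          (∀ (q u : EuclideanSpace ℝ (Fin n)), ‖u‖ = 1 →
            tube q u L ⊆ ⋃ i, tube (p i) (w i) L →
            ∀ σ : ℝ, 0 < σ →
              volume {x ∈ tube q u L | ¬ tube q u L ⊆ (fun y => x + σ • y) '' K x}
                ≤ ENNReal.ofReal (C * σ⁻¹) * volume (tube q u L)) := by
  obtain ⟨C0, hC0, hpack⟩ := package
  have hβpos : ∀ r : ℝ, 0 < r → 0 < volume.real (Metric.closedBall (0 : EuclideanSpace ℝ (Fin n)) r) := fun r hr =>
    ENNReal.toReal_pos (Metric.measure_closedBall_pos volume _ hr).ne' measure_closedBall_lt_top.ne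
  set β0 := volume.real (Metric.closedBall (0 : EuclideanSpace ℝ (Fin n)) (1/2)) with hβ0d
  set β1 := volume.real (Metric.closedBall (0 : EuclideanSpace ℝ (Fin n)) 1) with hβ1d
  set β2 := volume.real (Metric.closedBall (0 : EuclideanSpace ℝ (Fin n)) 2) with hβ2d
  have hβ0 : 0 < β0 := hβpos _ (by norm_num)
  have hβ1 : 0 < β1 := hβpos _ (by norm_num)
  have hβ2 : 0 < β2 := hβpos _ (by norm_num)
  set ε := β0 / (2 * C0) with hεd
  have hε : 0 < ε := by positivity
  have hεβ : C0 * ε = β0 / 2 := by rw [hεd]; field_simp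
  set C := 1 + 320 * β2 * n / ε + 320 * n * β2 ^ 2 / (ε * β1) with hC
  have hCA : 1 ≤ C := by
    have h1 : 0 ≤ 320 * β2 * n / ε := by positivity
    have h2 : 0 ≤ 320 * n * β2 ^ 2 / (ε * β1) := by positivity
    linarith
  have hCB : 320 * β2 * n / ε ≤ C := by
    have h2 : 0 ≤ 320 * n * β2 ^ 2 / (ε * β1) := by positivity
    linarith
  have hCC : 320 * n * β2 ^ 2 / (ε * β1) ≤ C := by
    have h1 : 0 ≤ 320 * β2 * n / ε := by positivity
    linarith
  refine ⟨C, by linarith, fun L hL m p w hw => ?_⟩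
  have hL1 : 1 ≤ L := hCA.trans hL
  have hL0 : 0 ≤ L := by linarith
  set X := ⋃ i, tube (p i) (w i) L with hXd
  have hXc : IsCompact X := isCompact_iUnion fun i => tube_compact _ _ _ hL0
  rcases Nat.eq_zero_or_pos m with hm | hm
  · subst hm
    have hXe : X = ∅ := by simp [hXd]
    refine ⟨fun _ => Set.univ, ?_, ?_⟩
    · intro x hx; rw [hXe] at hx; exact hx.elim
    · intro q u _ hT
      exfalso
      have : q ∈ tube q u L := (mem_tube hL0).mpr ⟨0, le_rfl, hL0, by simp⟩
      have := hT this
      rw [hXe] at this; exact this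
  have hball : ∀ i (t : ℝ), 0 ≤ t → t ≤ L → Metric.closedBall (p i + t • w i) 1 ⊆ X := by
    intro i t h0 h1 y hy
    exact Set.mem_iUnion.mpr ⟨i, (mem_tube hL0).mpr ⟨t, h0, h1, hy⟩⟩
  have hXfin : volume X ≠ ⊤ := hXc.measure_lt_top.ne
  have hN : 0 < volume.real X := by
    apply ENNReal.toReal_pos _ hXfin
    have := measure_mono (μ := volume) (hball ⟨0, hm⟩ 0 le_rfl hL0)
    exact ((Metric.measure_closedBall_pos volume _ one_pos).trans_le this).ne'
  obtain ⟨d, hd⟩ := exists_nat_ge (32 * (L + 2))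
  have hd1 : (1:ℝ) ≤ d := by linarith
  have hd1' : 1 ≤ d := by exact_mod_cast hd1
  obtain ⟨D, s, ρ, hs, h1, h2, h3, h4, hW⟩ := hpack n d X hXc hN
  have hcex : ∀ x, ∃ c, x ∈ X → dist x c ≤ 1 ∧ Metric.closedBall c 1 ⊆ X := by
    intro x
    by_cases hx : x ∈ X
    · obtain ⟨i, hi⟩ := Set.mem_iUnion.mp hx
      obtain ⟨t, h0, h1, h2⟩ := (mem_tube hL0).mp hi
      exact ⟨_, fun _ => ⟨h2, hball i t h0 h1⟩⟩
    · exact ⟨0, fun h => (hx h).elim⟩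
  choose cc hcc using hcex
  refine ⟨fun x => Kb s (cc x) ((d:ℝ)/32) ((d:ℝ)/16 * ε), ?_, ?_⟩
  · intro x hx
    refine ⟨Kb_convex s hs _ _ _, Kb_compact s hs _ _ _, Kb_interior s hs _ _ _ (by positivity) (by positivity),
      Kb_symm s _ _ _, ?_⟩
    have hv := K_vol (by omega) s hs (cc x) d hd1' ε (volume.real X) hN.le
      (K1_vol s hs (cc x) C0 ε _ hC0 hε X hXc (hcc x hx).2 ρ h1 h2 h3 h4 hεβ)
    have himg : volume ((fun y => x + y) '' Kb s (cc x) ((d:ℝ)/32) ((d:ℝ)/16 * ε)) =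
        volume (Kb s (cc x) ((d:ℝ)/32) ((d:ℝ)/16 * ε)) := by
      rw [Set.image_add_left, measure_preimage_add]
    rw [himg]
    exact (ENNReal.toReal_le_toReal (Kb_compact s hs _ _ _).measure_lt_top.ne hXfin).mp hv
  · intro q u hu hT σ hσ
    have hTfin : volume (tube q u L) ≠ ⊤ := (tube_compact q u L hL0).measure_lt_top.ne
    rcases le_or_gt σ C with hσC | hσC
    · have h5 : 1 ≤ ENNReal.ofReal (C * σ⁻¹) := by
        rw [← ENNReal.ofReal_one]
        apply ENNReal.ofReal_le_ofReal
        rw [← div_eq_mul_inv, le_div_iff₀ hσ]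
        linarith
      calc _ ≤ volume (tube q u L) := measure_mono fun x hx => hx.1
        _ = 1 * volume (tube q u L) := (one_mul _).symm
        _ ≤ _ := mul_le_mul' h5 le_rfl
    set W : ℝ := 4 * ((n * d : ℕ) : ℝ) + 1 with hWd
    have hn2 : (2:ℝ) ≤ n := by exact_mod_cast hn
    have hW0 : 0 ≤ W := by positivity
    have hW5 : W ≤ 5 * n * d := by
      rw [hWd]; push_cast
      nlinarith
    set θ := σ * d * ε / (32 * L) with hθd
    have hθ : 0 < θ := by positivity
    have hsub : {x ∈ tube q u L | ¬ tube q u L ⊆ (fun y => x + σ • y) '' Kb s (cc x) ((d:ℝ)/32) ((d:ℝ)/16 * ε)} ⊆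
        {x ∈ tube q u L | θ < Gs s (cc x) u} := by
      rintro x ⟨hx, hx2⟩
      refine ⟨hx, ?_⟩
      by_contra hcon
      push Not at hcon
      apply hx2
      refine good_pt s hs W hW hW0 (cc x) q u x hu L hL0 hx _ _ σ θ hσ ?_ ?_ hcon
      · have : (d:ℝ)/32 ≤ σ * ((d:ℝ)/32) := by
          have : 0 ≤ (d:ℝ)/32 := by positivity
          nlinarith
        linarith
      · have e1 : L * θ = σ * d * ε / 32 := by rw [hθd]; field_simp
        rw [e1]
        have e2 : 320 * β2 * n ≤ σ * ε := by
          rw [← div_le_iff₀ hε]; linarith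
        have e3 : β2 * W ≤ β2 * (5 * n * d) := by gcongr
        have e4 : 320 * β2 * n * d ≤ σ * ε * d := by gcongr
        linarith
    refine (measure_mono hsub).trans ?_
    have hmk := bad_markov s hs W hW cc q u hu L hL0 (fun x hx => (hcc x (hT hx)).1) θ
    have htv := tube_vol q u hu L hL0
    have hbfin : volume {x ∈ tube q u L | θ < Gs s (cc x) u} ≠ ⊤ :=
      ((measure_mono fun x hx => hx.1).trans_lt (tube_compact q u L hL0).measure_lt_top).ne
    set bv := volume {x ∈ tube q u L | θ < Gs s (cc x) u} with hbv
    -- pass to reals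
    have hmk' : θ * bv.toReal ≤ β2 * (β2 * W) := by
      have := ENNReal.toReal_mono (by
        exact ENNReal.mul_ne_top measure_closedBall_lt_top.ne (ENNReal.mul_ne_top measure_closedBall_lt_top.ne ENNReal.ofReal_ne_top)) hmk
      simpa [ENNReal.toReal_mul, ENNReal.toReal_ofReal hθ.le, ENNReal.toReal_ofReal hW0, hβ2d, measureReal_def] using this
    have htv' : L * β1 ≤ 2 * (volume (tube q u L)).toReal := by
      have := ENNReal.toReal_mono (ENNReal.mul_ne_top (by norm_num) hTfin) htv
      simpa [ENNReal.toReal_mul, ENNReal.toReal_ofReal hL0, hβ1d, measureReal_def] using this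
    rw [← ENNReal.ofReal_toReal hbfin, ← ENNReal.ofReal_toReal hTfin, ← ENNReal.ofReal_mul (by positivity)]
    apply ENNReal.ofReal_le_ofReal
    set bb := bv.toReal
    set tt := (volume (tube q u L)).toReal
    have hb1 : bb ≤ β2 * (β2 * (5 * n * d)) / θ := by
      rw [le_div_iff₀ hθ]
      have : β2 * (β2 * W) ≤ β2 * (β2 * (5 * n * d)) := by gcongr
      linarith
    have hb2 : β2 * (β2 * (5 * n * d)) / θ = (320 * n * β2 ^ 2 / (ε * β1)) * σ⁻¹ * (L * β1 / 2) := by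
      rw [hθd]; field_simp; ring
    calc bb ≤ _ := hb1
      _ = _ := hb2
      _ ≤ C * σ⁻¹ * tt := by gcongr; linarith
end

section
/- (Polynomial ham sandwich theorem, Stone–Tukey) Let n, d ≥ 1 and let N = binomial(n+d, d) − 1. Let U_1, …, U_N be open subsets of ℝ^n, each of finite Lebesgue measure. Then there exists a nonzero real polynomial P in n variables of total degree at most d such that P bisects each U_i, i.e. Vol{x ∈ U_i : P(x) > 0} = Vol{x ∈ U_i : P(x) < 0} for every i = 1, …, N. -/
open MvPolynomial
lemma even_of_no_hom {A : Type} [CommRing A] [Algebra ℝ A] [Module.Finite ℝ A]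
    (h : IsEmpty (A →ₐ[ℝ] ℝ)) : ∀ (n : ℕ) (M : Type) [AddCommGroup M] [Module A M] [Module ℝ M]
    [IsScalarTower ℝ A M] [Module.Finite ℝ M], Module.finrank ℝ M = n → Even n := by
  intro n
  induction n using Nat.strong_induction_on with
  | _ n ih =>
  intro M _ _ _ _ _ hn
  rcases Nat.eq_zero_or_pos n with h0 | hpos
  · simp [h0]
  have : Nontrivial M := Module.nontrivial_of_finrank_pos (R := ℝ) (by omega)
  have : IsArtinian A M := isArtinian_of_tower ℝ inferInstance
  obtain ⟨S, hS⟩ := IsAtomic.exists_atom (Submodule A M)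
  have hS' : IsSimpleModule A S := (isSimpleModule_iff_isAtom).2 hS
  obtain ⟨m, hm, ⟨e⟩⟩ := isSimpleModule_iff_quot_maximal.1 hS'
  have hsum := Submodule.finrank_quotient_add_finrank (S.restrictScalars ℝ)
  let := Ideal.Quotient.field m
  have hfin : Module.Finite ℝ (A ⧸ m) := inferInstance
  have : Algebra.IsAlgebraic ℝ (A ⧸ m) := Algebra.IsAlgebraic.of_finite _ _
  have h2 : Module.finrank ℝ (A ⧸ m) = 2 := by
    rcases Real.nonempty_algEquiv_or (A ⧸ m) with ⟨⟨f⟩⟩ | ⟨⟨f⟩⟩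
    · exact (h.false (f.toAlgHom.comp (Ideal.Quotient.mkₐ ℝ m))).elim
    · rw [f.toLinearEquiv.finrank_eq]; exact Complex.finrank_real_complex
  have h3 : Module.finrank ℝ (S.restrictScalars ℝ) = 2 := by
    rw [← h2]; exact (e.restrictScalars ℝ).finrank_eq
  have h4 := ih (n - 2) (by omega) (M ⧸ S) (by
    have : Module.finrank ℝ (M ⧸ S) = Module.finrank ℝ (M ⧸ (S.restrictScalars ℝ)) := rfl
    omega)
  have : n = (n - 2) + 2 := by omega
  rw [this]; exact h4.add (by decide)

lemma exists_hom_of_odd (A : Type) [CommRing A] [Algebra ℝ A] [Module.Finite ℝ A]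
    (h : Odd (Module.finrank ℝ A)) : Nonempty (A →ₐ[ℝ] ℝ) := by
  by_contra hc
  rw [not_nonempty_iff] at hc
  exact Nat.not_even_iff_odd.2 h (even_of_no_hom hc _ A rfl)

section
variable {R : Type} [CommRing R] {N : ℕ} (d : ℕ) (g : Fin N → MvPolynomial (Fin N) R)

noncomputable def vfam (m : Fin N →₀ ℕ) : MvPolynomial (Fin N) R :=
  ∏ i, (X i ^ (m i % d) * g i ^ (m i / d))

noncomputable def Phi : MvPolynomial (Fin N) R →ₗ[R] MvPolynomial (Fin N) R :=
  (basisMonomials (Fin N) R).constr R (vfam d g)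

lemma Phi_monomial (m : Fin N →₀ ℕ) : Phi d g (monomial m 1) = vfam d g m := by
  have := (basisMonomials (Fin N) R).constr_basis R (vfam d g) m
  simpa [Phi] using this

lemma vfam_add (hd : 0 < d) (i : Fin N) (m : Fin N →₀ ℕ) :
    vfam d g (Finsupp.single i d + m) = g i * vfam d g m := by
  classical
  unfold vfam
  rw [← Finset.mul_prod_erase _ _ (Finset.mem_univ i),
    ← Finset.mul_prod_erase (s := Finset.univ) (a := i) _ (Finset.mem_univ i), ← mul_assoc]
  congr 1
  · simp [Nat.add_div_left _ hd, pow_succ]; ring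
  · refine Finset.prod_congr rfl fun j hj => ?_
    have : i ≠ j := fun h => by simp [h] at hj
    simp [this]

lemma Phi_mul (hd : 0 < d) (i : Fin N) (q : MvPolynomial (Fin N) R) :
    Phi d g (X i ^ d * q) = g i * Phi d g q := by
  have : (Phi d g) ∘ₗ (LinearMap.mulLeft R (X i ^ d)) = (LinearMap.mulLeft R (g i)) ∘ₗ Phi d g := by
    refine (basisMonomials (Fin N) R).ext fun m => ?_
    simp only [coe_basisMonomials, LinearMap.comp_apply, LinearMap.mulLeft_apply]
    rw [X_pow_eq_monomial, monomial_mul, one_mul, Phi_monomial, Phi_monomial, vfam_add _ _ hd]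
  exact LinearMap.congr_fun this q

lemma vfam_X (m : Fin N →₀ ℕ) :
    vfam d (fun i => (X i ^ d : MvPolynomial (Fin N) R)) m = monomial m 1 := by
  unfold vfam
  rw [monomial_eq, C_1, one_mul, Finsupp.prod_fintype _ _ (by simp)]
  refine Finset.prod_congr rfl fun i _ => ?_
  rw [← pow_mul, ← pow_add, Nat.mod_add_div]

lemma vfam_map {S : Type} [CommRing S] (f : R →+* S) (m : Fin N →₀ ℕ) :
    map f (vfam d g m) = vfam d (fun i => map f (g i)) m := by
  simp [vfam]

lemma vfam_degree (hg : ∀ i, (g i).totalDegree ≤ d) (m : Fin N →₀ ℕ) :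
    (vfam d g m).totalDegree ≤ m.degree := by
  rcases subsingleton_or_nontrivial R with h | h
  · rw [Subsingleton.elim (vfam d g m) 0]; simp
  unfold vfam
  refine (totalDegree_finsetProd _ _).trans ?_
  rw [Finsupp.degree_eq_sum]
  refine Finset.sum_le_sum fun i _ => ?_
  refine (totalDegree_mul _ _).trans ?_
  have h1 := totalDegree_pow (g i) (m i / d)
  have h2 : (m i / d) * (g i).totalDegree ≤ (m i / d) * d := Nat.mul_le_mul_left _ (hg i)
  rw [totalDegree_X_pow]
  have := Nat.mod_add_div' (m i) d
  omega
end

lemma finrank_monomial_quot (N d : ℕ) :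
    Module.finrank ℝ (MvPolynomial (Fin N) ℝ ⧸
      (Ideal.span (Set.range fun i : Fin N => (X i ^ d : MvPolynomial (Fin N) ℝ)))) = d ^ N := by
  classical
  set I := (Ideal.span (Set.range fun i : Fin N => (X i ^ d : MvPolynomial (Fin N) ℝ))) with hI
  let mk : (Fin N → Fin d) → (Fin N →₀ ℕ) := fun a => Finsupp.equivFunOnFinite.symm fun i => (a i : ℕ)
  have hmk : Function.Injective mk := fun a b h => by
    funext i
    have := DFunLike.congr_fun h i
    exact Fin.ext (by simpa [mk] using this)
  let L : MvPolynomial (Fin N) ℝ →ₗ[ℝ] ((Fin N → Fin d) → ℝ) := LinearMap.pi fun a => lcoeff ℝ (mk a)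
  have hL : ∀ q a, L q a = coeff (mk a) q := fun q a => rfl
  have hsurj : Function.Surjective L := by
    intro c
    refine ⟨∑ a, monomial (mk a) (c a), ?_⟩
    funext b
    rw [hL, coeff_sum]
    simp [coeff_monomial, hmk.eq_iff]
  have hker : LinearMap.ker L = I.restrictScalars ℝ := by
    ext q
    have : Set.range (fun i : Fin N => (X i ^ d : MvPolynomial (Fin N) ℝ)) =
        (fun s => monomial s (1:ℝ)) '' (Set.range fun i : Fin N => Finsupp.single i d) := by
      rw [← Set.range_comp]
      congr 1; funext i; simp [X_pow_eq_monomial]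
    rw [LinearMap.mem_ker, Submodule.restrictScalars_mem, hI, this, mem_ideal_span_monomial_image]
    constructor
    · intro h m hm
      by_contra! hc
      have hlt : ∀ i, m i < d := fun i => by
        have := hc _ ⟨i, rfl⟩
        simpa using this
      have := congrFun h (fun i => ⟨m i, hlt i⟩)
      rw [hL] at this
      have e : mk (fun i => ⟨m i, hlt i⟩) = m := by ext i; simp [mk]
      rw [e] at this
      exact (mem_support_iff.1 hm) this
    · intro h
      funext a
      rw [hL]
      by_contra hne
      obtain ⟨_, ⟨i, rfl⟩, hi⟩ := h _ (mem_support_iff.2 hne)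
      have := (Finsupp.single_le_iff).1 hi
      simp only [mk, Finsupp.equivFunOnFinite_symm_apply_apply] at this
      exact absurd this (not_le.2 (a i).2)
  have e := (L.quotKerEquivOfSurjective hsurj).finrank_eq
  rw [hker] at e
  have e2 : Module.finrank ℝ (MvPolynomial (Fin N) ℝ ⧸ I) =
    Module.finrank ℝ (MvPolynomial (Fin N) ℝ ⧸ I.restrictScalars ℝ) := rfl
  rw [e2, e]; simp

lemma exists_zero_of_bij {N d : ℕ} (hd : Odd d) (g : Fin N → MvPolynomial (Fin N) ℝ)
    (hb : Function.Bijective (Phi d g)) : ∃ x : Fin N → ℝ, ∀ i, eval x (g i) = 0 := by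
  set I := (Ideal.span (Set.range fun i : Fin N => (X i ^ d : MvPolynomial (Fin N) ℝ))) with hI
  set J := Ideal.span (Set.range g) with hJ
  let E := LinearEquiv.ofBijective _ hb
  have hmap : (I.restrictScalars ℝ).map (E : MvPolynomial (Fin N) ℝ →ₗ[ℝ] MvPolynomial (Fin N) ℝ) = J.restrictScalars ℝ := by
    ext y
    simp only [Submodule.mem_map, Submodule.restrictScalars_mem, hI, hJ, Ideal.mem_span_range_iff_exists_fun]
    constructor
    · rintro ⟨_, ⟨c, rfl⟩, rfl⟩
      refine ⟨fun i => Phi d g (c i), ?_⟩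
      rw [map_sum]
      refine Finset.sum_congr rfl fun i _ => ?_
      change _ = Phi d g _
      rw [mul_comm (c i), Phi_mul _ _ hd.pos, mul_comm]
    · rintro ⟨c, rfl⟩
      choose b hbb using fun i => hb.2 (c i)
      refine ⟨_, ⟨b, rfl⟩, ?_⟩
      rw [map_sum]
      refine Finset.sum_congr rfl fun i _ => ?_
      change Phi d g _ = _
      rw [mul_comm (b i), Phi_mul _ _ hd.pos, mul_comm, hbb]
  have e := (Submodule.Quotient.equiv _ _ E hmap)
  have h1 : Module.finrank ℝ (MvPolynomial (Fin N) ℝ ⧸ J) = d ^ N := by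
    rw [← finrank_monomial_quot N d]; exact e.symm.finrank_eq
  have hodd : Odd (Module.finrank ℝ (MvPolynomial (Fin N) ℝ ⧸ J)) := h1 ▸ hd.pow
  have hf : Module.Finite ℝ (MvPolynomial (Fin N) ℝ ⧸ J) := Module.finite_of_finrank_pos hodd.pos
  obtain ⟨φ⟩ := exists_hom_of_odd _ hodd
  let ψ := φ.comp (Ideal.Quotient.mkₐ ℝ J)
  refine ⟨fun i => ψ (X i), fun i => ?_⟩
  have : ψ (g i) = 0 := by
    have : Ideal.Quotient.mkₐ ℝ J (g i) = 0 := by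
      rw [Ideal.Quotient.mkₐ_eq_mk, Ideal.Quotient.eq_zero_iff_mem]
      exact Ideal.subset_span ⟨i, rfl⟩
    change φ (Ideal.Quotient.mkₐ ℝ J (g i)) = 0
    rw [this, map_zero]
  rw [← this, ← coe_aeval_eq_eval]
  have := congrArg (fun f => f (g i)) (aeval_unique ψ)
  exact this.symm

lemma Phi_bij {N d : ℕ} (g : Fin N → MvPolynomial (Fin N) ℝ) (hg : ∀ i, (g i).totalDegree ≤ d)
    (h : ∀ e, Function.Injective (fun q : restrictTotalDegree (Fin N) ℝ e => Phi d g q)) :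
    Function.Bijective (Phi d g) := by
  have hmap : ∀ e, ∀ q ∈ restrictTotalDegree (Fin N) ℝ e, Phi d g q ∈ restrictTotalDegree (Fin N) ℝ e := by
    intro e q hq
    rw [q.as_sum, map_sum]
    refine Submodule.sum_mem _ fun m hm => ?_
    have : monomial m (coeff m q) = coeff m q • monomial m (1:ℝ) := by simp [smul_monomial]
    rw [this, map_smul, Phi_monomial]
    refine Submodule.smul_mem _ _ ?_
    rw [mem_restrictTotalDegree] at hq ⊢
    exact (vfam_degree _ _ hg m).trans ((le_totalDegree hm).trans hq)
  constructor
  · rw [injective_iff_map_eq_zero]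
    intro q hq
    have := @h q.totalDegree ⟨q, (mem_restrictTotalDegree _ _ _).2 le_rfl⟩ 0 (by simp [hq])
    simpa using congrArg Subtype.val this
  · intro q
    have hi : Function.Injective ((Phi d g).restrict (hmap q.totalDegree)) := by
      intro a b hab
      exact h _ (congrArg Subtype.val hab)
    obtain ⟨y, hy⟩ := LinearMap.injective_iff_surjective.1 hi ⟨q, (mem_restrictTotalDegree _ _ _).2 le_rfl⟩
    exact ⟨y, congrArg Subtype.val hy⟩

lemma generic_inj {N d : ℕ} (p : Fin N → MvPolynomial (Fin N) ℝ) (e : ℕ) :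
    {t : ℝ | ¬ Function.Injective (fun q : restrictTotalDegree (Fin N) ℝ e =>
      Phi d (fun i => X i ^ d + C t * p i) q)}.Finite := by
  classical
  have : Finite {m : Fin N →₀ ℕ // m.degree ≤ e} := (Finsupp.finite_of_degree_le e).to_subtype
  have := Fintype.ofFinite {m : Fin N →₀ ℕ // m.degree ≤ e}
  let gT : Fin N → MvPolynomial (Fin N) (Polynomial ℝ) :=
    fun i => X i ^ d + C Polynomial.X * map Polynomial.C (p i)
  let M : Matrix {m : Fin N →₀ ℕ // m.degree ≤ e} {m : Fin N →₀ ℕ // m.degree ≤ e} (Polynomial ℝ) :=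
    fun m' m => coeff m'.1 (vfam d gT m.1)
  have hgt : ∀ t : ℝ, (fun i => map (Polynomial.evalRingHom t) (gT i)) =
      (fun i => X i ^ d + C t * p i) := by
    intro t
    funext i
    have : (Polynomial.evalRingHom t).comp Polynomial.C = RingHom.id ℝ := by ext; simp
    simp [gT, map_map, this, map_id]
  have hM : ∀ t : ℝ, ∀ m' m, (M.map (Polynomial.evalRingHom t)) m' m =
      coeff m'.1 (vfam d (fun i => X i ^ d + C t * p i) m.1) := by
    intro t m' m
    rw [← hgt t, ← vfam_map, coeff_map]; rfl
  have hdet : ∀ t : ℝ, M.det.eval t = (M.map (Polynomial.evalRingHom t)).det := by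
    intro t
    have := RingHom.map_det (Polynomial.evalRingHom t) M
    simpa using this
  have hne : M.det ≠ 0 := by
    intro h0
    have h1 := hdet 0
    have : M.map (Polynomial.evalRingHom 0) = 1 := by
      ext m' m
      rw [hM]
      simp only [C_0, zero_mul, add_zero]
      rw [vfam_X, coeff_monomial, Matrix.one_apply]
      simp [Subtype.ext_iff, eq_comm]
    rw [this, h0] at h1
    simp at h1
  refine (Polynomial.finite_setOfPred_isRoot hne).subset ?_
  intro t ht
  by_contra hr
  apply ht
  have hdt : (M.map (Polynomial.evalRingHom t)).det ≠ 0 := by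
    rw [← hdet]; exact hr
  have key : ∀ q ∈ restrictTotalDegree (Fin N) ℝ e,
      Phi d (fun i => X i ^ d + C t * p i) q = 0 → q = 0 := by
    intro q hq h0
    rw [mem_restrictTotalDegree] at hq
    have hs : ∀ m ∈ q.support, m.degree ≤ e := fun m hm => (le_totalDegree hm).trans hq
    have hqs : q = ∑ m : {m : Fin N →₀ ℕ // m.degree ≤ e}, coeff m.1 q • monomial m.1 (1:ℝ) := by
      ext m
      rw [coeff_sum]
      simp only [coeff_smul, coeff_monomial, smul_eq_mul, mul_ite, mul_one, mul_zero]
      by_cases hm : m.degree ≤ e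
      · rw [Finset.sum_eq_single ⟨m, hm⟩]
        · simp
        · intro b _ hb
          rw [if_neg]; intro hbm; exact hb (Subtype.ext hbm)
        · simp
      · rw [Finset.sum_eq_zero]
        · by_contra hc; exact hm (hs m (mem_support_iff.2 hc))
        · intro b _
          rw [if_neg]; rintro rfl; exact hm b.2
    have hv : (M.map (Polynomial.evalRingHom t)).mulVec (fun m => coeff m.1 q) = 0 := by
      funext m'
      have := congrArg (coeff m'.1) h0
      rw [hqs, map_sum, coeff_sum] at this
      simp only [map_smul, Phi_monomial, coeff_smul, coeff_zero, smul_eq_mul] at this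
      simp only [Matrix.mulVec, dotProduct, hM, Pi.zero_apply]
      rw [← this]
      exact Finset.sum_congr rfl fun _ _ => mul_comm _ _
    have := Matrix.eq_zero_of_mulVec_eq_zero hdt hv
    rw [hqs]
    refine Finset.sum_eq_zero fun m _ => ?_
    have h5 := congrFun this m
    simp only [Pi.zero_apply] at h5
    rw [h5, zero_smul]
  intro a b hab
  have := key (a - b : restrictTotalDegree (Fin N) ℝ e) (Subtype.property _) (by
    simp only at hab
    simp [hab])
  exact sub_eq_zero.1 (Subtype.ext this)

lemma exists_large_zero {N d : ℕ} (hd : Odd d) (p : Fin N → MvPolynomial (Fin N) ℝ)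
    (hp : ∀ i, (p i).totalDegree ≤ d) (T : ℝ) :
    ∃ t > T, ∃ x : Fin N → ℝ, ∀ i, x i ^ d + t * eval x (p i) = 0 := by
  have hc : (⋃ e, {t : ℝ | ¬ Function.Injective (fun q : restrictTotalDegree (Fin N) ℝ e =>
      Phi d (fun i => X i ^ d + C t * p i) q)}).Countable :=
    Set.countable_iUnion fun e => (generic_inj p e).countable
  obtain ⟨t, ht1, ht2⟩ : ∃ t, t ∉ (⋃ e, {t : ℝ | ¬ Function.Injective
      (fun q : restrictTotalDegree (Fin N) ℝ e =>
      Phi d (fun i => X i ^ d + C t * p i) q)}) ∧ T < t := by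
    by_contra! hcon
    have : Set.Ioi T ⊆ _ := fun t ht => by_contra fun h => absurd (hcon t h) (not_le.2 ht)
    have h2 := hc.mono this
    have h3 := h2.measure_zero MeasureTheory.volume
    simp at h3
  refine ⟨t, ht2, ?_⟩
  simp only [Set.mem_iUnion, Set.mem_ofPred_eq, not_exists, not_not] at ht1
  have hb := Phi_bij (d := d) (fun i => X i ^ d + C t * p i) (fun i => by
    refine (totalDegree_add _ _).trans (max_le (by simp) ?_)
    refine (totalDegree_mul _ _).trans (by simpa using hp i)) ht1
  obtain ⟨x, hx⟩ := exists_zero_of_bij hd _ hb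
  exact ⟨x, fun i => by simpa using hx i⟩
/-- unit sphere -/
def usph (N : ℕ) : Set (Fin N → ℝ) := {x | ∑ j, x j ^ 2 = 1}

lemma usph_le {N : ℕ} {x : Fin N → ℝ} (hx : x ∈ usph N) (j : Fin N) : |x j| ≤ 1 := by
  have h : ∑ j, x j ^ 2 = 1 := hx
  have : x j ^ 2 ≤ 1 := by
    rw [← h]; exact Finset.single_le_sum (f := fun j => x j ^ 2) (fun i _ => sq_nonneg _) (Finset.mem_univ j)
  exact (sq_le_one_iff_abs_le_one _).1 this

lemma usph_compact (N : ℕ) : IsCompact (usph N) := by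
  refine Metric.isCompact_of_isClosed_isBounded ?_ ?_
  · exact isClosed_eq (by fun_prop) continuous_const
  · refine (Metric.isBounded_closedBall (x := (0 : Fin N → ℝ)) (r := 1)).subset fun x hx => ?_
    rw [mem_closedBall_zero_iff, pi_norm_le_iff_of_nonneg zero_le_one]
    exact fun j => usph_le hx j

lemma usph_approx {N : ℕ} (f : (Fin N → ℝ) → ℝ) (hf : ContinuousOn f (usph N)) {δ : ℝ} (hδ : 0 < δ) :
    ∃ q : MvPolynomial (Fin N) ℝ, ∀ x ∈ usph N, |eval x q - f x| < δ := by
  have : CompactSpace (usph N) := isCompact_iff_compactSpace.1 (usph_compact N)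
  let ev : MvPolynomial (Fin N) ℝ →ₐ[ℝ] C(usph N, ℝ) :=
    aeval fun j => ⟨fun x => x.1 j, (continuous_apply j).comp continuous_subtype_val⟩
  have hev : ∀ q x, ev q x = eval x.1 q := by
    intro q x
    induction q using MvPolynomial.induction_on with
    | C a => simp [ev]
    | add p q hp hq => simp [hp, hq]
    | mul_X p j hp => simp [hp]; left; simp [ev]
  have hsep : ev.range.SeparatesPoints := by
    intro x y hxy
    obtain ⟨j, hj⟩ : ∃ j, x.1 j ≠ y.1 j := by
      by_contra! h; exact hxy (Subtype.ext (funext h))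
    refine ⟨_, ⟨ev (X j), ⟨X j, rfl⟩, rfl⟩, ?_⟩
    simpa [hev] using hj
  obtain ⟨⟨_, ⟨q, rfl⟩⟩, hq⟩ := ContinuousMap.exists_mem_subalgebra_near_continuous_of_separatesPoints
    ev.range hsep (fun x => f x.1) (continuousOn_iff_continuous_domRestrict.1 hf) δ hδ
  refine ⟨q, fun x hx => ?_⟩
  have := hq ⟨x, hx⟩
  rw [← hev q ⟨x, hx⟩]
  exact this

lemma eval_smul_comp {N : ℕ} (q : MvPolynomial (Fin N) ℝ) (k : ℕ) (s : ℝ) (y : Fin N → ℝ) :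
    eval (s • y) (homogeneousComponent k q) = s ^ k * eval y (homogeneousComponent k q) := by
  rw [eval_eq', eval_eq', Finset.mul_sum]
  refine Finset.sum_congr rfl fun m hm => ?_
  have hdeg : ∑ i, m i = k := by
    have := homogeneousComponent_isHomogeneous k q (mem_support_iff.1 hm)
    rw [← this, Finsupp.weight_apply, Finsupp.sum_fintype _ _ (by simp)]; simp
  simp only [Pi.smul_apply, smul_eq_mul, mul_pow, Finset.prod_mul_distrib]
  rw [Finset.prod_pow_eq_pow_sum, hdeg]
  ring

/-- dehomogenization of the odd part -/
lemma odd_part {N d : ℕ} (hd : Odd d) (q : MvPolynomial (Fin (N + 1)) ℝ) (hq : q.totalDegree ≤ d) :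
    ∃ p : MvPolynomial (Fin N) ℝ, p.totalDegree ≤ d ∧
      ∀ (x : Fin N → ℝ) (s : ℝ) (y : Fin (N + 1) → ℝ), y ∈ usph (N + 1) →
        (Fin.cons 1 x : Fin (N + 1) → ℝ) = s • y →
        eval x p = s ^ d * ((eval y q - eval (-y) q) / 2) := by
  let X' : Fin (N + 1) → MvPolynomial (Fin N) ℝ := Fin.cons 1 X
  let r : MvPolynomial (Fin N) ℝ := 1 + ∑ j, X j ^ 2
  let K := (Finset.range (d + 1)).filter Odd
  refine ⟨∑ k ∈ K, aeval X' (homogeneousComponent k q) * r ^ ((d - k) / 2), ?_, ?_⟩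
  · refine totalDegree_finsetSum_le fun k hk => ?_
    have hk' : k ≤ d ∧ Odd k := by simpa [K, Nat.lt_succ_iff] using hk
    have hr : r.totalDegree ≤ 2 := by
      refine (totalDegree_add _ _).trans (max_le (by simp) ?_)
      exact totalDegree_finsetSum_le fun j _ => by simp
    have h1 : (aeval X' (homogeneousComponent k q)).totalDegree ≤ k := by
      rw [aeval_def, eval₂_eq]
      refine totalDegree_finsetSum_le fun m hm => ?_
      have hdeg : ∑ i, m i = k := by
        have := homogeneousComponent_isHomogeneous k q (mem_support_iff.1 hm)
        rw [← this, Finsupp.weight_apply, Finsupp.sum_fintype _ _ (by simp)]; simp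
      refine (totalDegree_mul _ _).trans ?_
      rw [algebraMap_eq, totalDegree_C, zero_add, ← hdeg]
      refine (totalDegree_finsetProd _ _).trans ?_
      refine (Finset.sum_le_sum (g := fun i => m i) fun i _ => ?_).trans
        (Finset.sum_le_sum_of_subset (Finset.subset_univ _))
      refine (totalDegree_pow _ _).trans ?_
      have : (X' i).totalDegree ≤ 1 := by
        refine Fin.cases ?_ (fun j => ?_) i <;> simp [X']
      simpa using Nat.mul_le_mul_left (m i) this
    have h2 : (r ^ ((d - k) / 2)).totalDegree ≤ (d - k) / 2 * 2 :=
      (totalDegree_pow _ _).trans (Nat.mul_le_mul_left _ hr)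
    refine (totalDegree_mul _ _).trans ?_
    have := hk'.1
    omega
  · intro x s y hy hxy
    have hs : 1 + ∑ j, x j ^ 2 = s ^ 2 := by
      have h1 : ∑ j, (Fin.cons 1 x : Fin (N + 1) → ℝ) j ^ 2 = 1 + ∑ j, x j ^ 2 := by
        simp [Fin.sum_univ_succ]
      rw [← h1, hxy]
      have h2 : ∑ j, y j ^ 2 = 1 := hy
      simp only [Pi.smul_apply, smul_eq_mul, mul_pow, ← Finset.mul_sum, h2, mul_one]
    have hX : (fun i => eval x (X' i)) = s • y := by
      rw [← hxy]
      funext i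
      refine Fin.cases ?_ (fun j => ?_) i <;> simp [X']
    have hev : ∀ f : MvPolynomial (Fin (N+1)) ℝ, eval x (aeval X' f) = eval (s • y) f := by
      intro f
      rw [← hX, ← coe_aeval_eq_eval, ← coe_aeval_eq_eval]
      change (aeval x).comp (aeval X') f = _
      rw [comp_aeval]
      rfl
    have hsum : ∀ z, eval z q = ∑ k ∈ Finset.range (d + 1), eval z (homogeneousComponent k q) := by
      intro z
      rw [← map_sum]
      congr 1
      conv_lhs => rw [← sum_homogeneousComponent q]
      refine Finset.sum_subset (by intro a; simp; omega) fun k _ hk => ?_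
      refine homogeneousComponent_eq_zero _ _ ?_
      simpa using hk
    rw [map_sum, hsum, hsum, ← Finset.sum_sub_distrib, Finset.sum_div, Finset.mul_sum, Finset.sum_filter]
    refine Finset.sum_congr rfl fun k hk => ?_
    have hk' : k ≤ d := by simpa [Nat.lt_succ_iff] using hk
    have hneg := eval_smul_comp q k (-1) y
    rw [neg_one_smul] at hneg
    rw [hneg]
    split_ifs with ho
    · rw [map_mul, hev, eval_smul_comp, map_pow]
      have : eval x r = s ^ 2 := by simp [r, hs]
      rw [this, ho.neg_one_pow, ← pow_mul]
      have h3 : 2 * ((d - k) / 2) + k = d := by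
        obtain ⟨a, rfl⟩ := hd; obtain ⟨b, rfl⟩ := ho; omega
      conv_rhs => rw [← h3, pow_add]
      ring
    · rw [(Nat.not_odd_iff_even.1 ho).neg_one_pow]; ring

theorem borsuk_ulam {N : ℕ} (F : (Fin (N + 1) → ℝ) → Fin N → ℝ)
    (hF : ContinuousOn F (usph (N + 1))) (hodd : ∀ x, F (-x) = - F x) :
    ∃ x ∈ usph (N + 1), F x = 0 := by
  by_contra! hcon
  have hne : (usph (N + 1)).Nonempty := ⟨Pi.single 0 1, by simp [usph, Pi.single_apply]⟩
  obtain ⟨x0, hx0, hmin⟩ := (usph_compact (N + 1)).exists_isMinOn hne hF.norm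
  set δ := ‖F x0‖ with hδ
  have hδ0 : 0 < δ := norm_pos_iff.2 (hcon x0 hx0)
  choose q hq using fun i => usph_approx (fun x => F x i)
    ((continuous_apply i).comp_continuousOn hF) (half_pos hδ0)
  let d := 2 * (∑ i, (q i).totalDegree) + 1
  have hd : Odd d := ⟨_, rfl⟩
  have hqd : ∀ i, (q i).totalDegree ≤ d := fun i => by
    have := Finset.single_le_sum (f := fun i => (q i).totalDegree) (fun i _ => Nat.zero_le _) (Finset.mem_univ i)
    omega
  choose p hpd hp using fun i => odd_part hd (q i) (hqd i)
  obtain ⟨t, ht, x, hx⟩ := exists_large_zero hd p hpd (2 / δ)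
  have ht0 : 0 < t := lt_trans (by positivity) ht
  let z : Fin (N + 1) → ℝ := Fin.cons 1 x
  let s := Real.sqrt (∑ j, z j ^ 2)
  have hz : 0 < ∑ j, z j ^ 2 := by
    rw [Fin.sum_univ_succ]; simp only [z, Fin.cons_zero]; positivity
  have hs : 0 < s := Real.sqrt_pos.2 hz
  have hs2 : s ^ 2 = ∑ j, z j ^ 2 := Real.sq_sqrt hz.le
  let y : Fin (N + 1) → ℝ := s⁻¹ • z
  have hzy : z = s • y := by simp [y, smul_smul, hs.ne']
  have hy : y ∈ usph (N + 1) := by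
    change ∑ j, y j ^ 2 = 1
    simp only [y, Pi.smul_apply, smul_eq_mul, mul_pow, ← Finset.mul_sum]
    rw [← hs2]; field_simp
  have hny : -y ∈ usph (N + 1) := by
    have : ∑ j, y j ^ 2 = 1 := hy
    simpa [usph] using this
  have : ‖F y‖ < δ := by
    rw [pi_norm_lt_iff hδ0]
    intro i
    have h1 := hp i x s y hy hzy
    have h2 := hx i
    have hxi : x i = s * y i.succ := by
      have := congrFun hzy i.succ
      simpa [z] using this
    rw [h1, hxi, mul_pow] at h2
    have h3 : y i.succ ^ d + t * ((eval y (q i) - eval (-y) (q i)) / 2) = 0 := by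
      have : s ^ d ≠ 0 := pow_ne_zero _ hs.ne'
      apply mul_left_cancel₀ this
      linear_combination h2
    have h4 : |y i.succ ^ d| ≤ 1 := by
      rw [abs_pow]; exact pow_le_one₀ (abs_nonneg _) (usph_le hy _)
    have h5 := hq i y hy
    have h6 := hq i (-y) hny
    simp only [hodd y, Pi.neg_apply] at h6
    have h7 : 1 < t * (δ / 2) := by
      have := (div_lt_iff₀ hδ0).1 ht
      linarith
    rw [Real.norm_eq_abs]
    set A := (eval y (q i) - eval (-y) (q i)) / 2 with hA
    have h8 : |A| < δ / 2 := by
      have : t * |A| ≤ 1 := by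
        rw [← abs_of_pos ht0, ← abs_mul]
        have : t * A = - (y i.succ ^ d) := by linarith
        rw [this, abs_neg]; exact h4
      nlinarith
    rw [abs_lt] at *
    constructor <;> linarith [h5.1, h5.2, h6.1, h6.2, h8.1, h8.2]
  exact absurd (hmin hy) (not_le.2 this)
open MeasureTheory
open scoped ENNReal

lemma null_zeros : ∀ (n : ℕ) (P : MvPolynomial (Fin n) ℝ), P ≠ 0 →
    volume {x : Fin n → ℝ | eval x P = 0} = 0
  | 0, P, hP => by
    have : {x : Fin 0 → ℝ | eval x P = 0} = ∅ := by
      ext x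
      simp only [Set.mem_ofPred_eq, Set.mem_empty_iff_false, iff_false]
      intro h
      apply hP
      rw [eq_C_of_isEmpty P] at h ⊢
      rw [eval_C] at h
      rw [h, C_0]
    simp [this]
  | n + 1, P, hP => by
    have hQ : finSuccEquiv ℝ n P ≠ 0 := by simpa using hP
    set Q := finSuccEquiv ℝ n P with hQdef
    have hl := null_zeros n Q.leadingCoeff (Polynomial.leadingCoeff_ne_zero.2 hQ)
    have hmp := (volume_preserving_piFinSuccAbove (fun _ : Fin (n + 1) => ℝ) 0)
    have hmp2 : MeasurePreserving (Prod.swap : ℝ × (Fin n → ℝ) → (Fin n → ℝ) × ℝ) volume volume :=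
      Measure.measurePreserving_swap
    have hm := hmp2.comp hmp
    let T : Set ((Fin n → ℝ) × ℝ) := {z | eval (Fin.cons z.2 z.1 : Fin (n + 1) → ℝ) P = 0}
    have hT : MeasurableSet T := by
      refine (isClosed_eq ?_ continuous_const).measurableSet
      refine (MvPolynomial.continuous_eval P).comp ?_
      refine continuous_pi fun i => ?_
      refine Fin.cases ?_ (fun j => ?_) i
      · simpa using continuous_snd
      · simp only [Fin.cons_succ]; exact (continuous_apply j).comp continuous_fst
    have hpre : {x : Fin (n + 1) → ℝ | eval x P = 0} =
        (Prod.swap ∘ (MeasurableEquiv.piFinSuccAbove (fun _ : Fin (n + 1) => ℝ) 0)) ⁻¹' T := by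
      ext x
      simp only [Set.mem_ofPred_eq, Set.mem_preimage, T, Function.comp]
      have : (Fin.cons (x 0) (fun j => x (Fin.succ j)) : Fin (n+1) → ℝ) = x := Fin.cons_self_tail x
      conv_lhs => rw [← this]
      rfl
    rw [hpre, hm.measure_preimage hT.nullMeasurableSet]
    change (Measure.prod volume volume) T = 0
    rw [Measure.measure_prod_null hT]
    have hae : ∀ᵐ y : Fin n → ℝ, eval y Q.leadingCoeff ≠ 0 := by
      rw [ae_iff]; simpa using hl
    filter_upwards [hae] with y hy
    have hne : Polynomial.map (eval y) Q ≠ 0 := by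
      intro h0
      apply hy
      have := congrArg (fun f => Polynomial.coeff f Q.natDegree) h0
      simpa using this
    refine Set.Finite.measure_zero ((Polynomial.finite_setOfPred_isRoot hne).subset ?_) _
    intro s hs
    have hs' : eval (Fin.cons s y : Fin (n + 1) → ℝ) P = 0 := hs
    rw [eval_eq_eval_mv_eval'] at hs'
    exact hs'

lemma null_zeros_euclid (n : ℕ) (P : MvPolynomial (Fin n) ℝ) (hP : P ≠ 0) :
    ∀ᵐ x : EuclideanSpace ℝ (Fin n), eval (fun j => x j) P ≠ 0 := by
  have h := (EuclideanSpace.volume_preserving_symm_measurableEquiv_toLp (Fin n)).quasiMeasurePreserving.ae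
    (p := fun x => eval x P ≠ 0) (by rw [ae_iff]; simpa using null_zeros n P hP)
  exact h

/-- real sign function -/
noncomputable def sg (r : ℝ) : ℝ := (Set.Ioi (0:ℝ)).indicator 1 r - (Set.Iio (0:ℝ)).indicator 1 r

lemma sg_neg (r : ℝ) : sg (-r) = - sg r := by
  simp [sg, Set.indicator_apply]

lemma sg_meas : Measurable sg :=
  (measurable_one.indicator measurableSet_Ioi).sub (measurable_one.indicator measurableSet_Iio)

lemma sg_abs (r : ℝ) : ‖sg r‖ ≤ 1 := by
  rcases lt_trichotomy r 0 with h | h | h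
  · simp [sg, Set.indicator_apply, h, h.le, not_lt.2 h.le]
  · simp [sg, h]
  · simp [sg, Set.indicator_apply, h, h.le, not_lt.2 h.le]

lemma sg_cont {r : ℝ} (hr : r ≠ 0) : ContinuousAt sg r := by
  rcases lt_or_gt_of_ne hr with h | h
  · refine ContinuousAt.congr (f := fun _ => (-1 : ℝ)) continuousAt_const ?_
    filter_upwards [Iio_mem_nhds h] with s hs
    have hs : s < 0 := hs
    simp [sg, Set.indicator_apply, hs, not_lt.2 hs.le]
  · refine ContinuousAt.congr (f := fun _ => (1 : ℝ)) continuousAt_const ?_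
    filter_upwards [Ioi_mem_nhds h] with s hs
    have hs : 0 < s := hs
    simp [sg, Set.indicator_apply, hs, not_lt.2 hs.le]

lemma exists_monomials (n d : ℕ) : ∃ μ : Fin ((n + d).choose d - 1 + 1) → (Fin n →₀ ℕ),
    Function.Injective μ ∧ ∀ j, (μ j).degree ≤ d := by
  classical
  have hc : Fintype.card (Sym (Fin (n + 1)) d) = (n + d).choose d - 1 + 1 := by
    rw [Sym.card_sym_eq_choose, Fintype.card_fin, Nat.sub_add_cancel (Nat.choose_pos (by omega))]
    congr 1; omega
  let e := (Fintype.equivFinOfCardEq hc).symm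
  let ν : Sym (Fin (n + 1)) d → (Fin n →₀ ℕ) := fun s =>
    Finsupp.equivFunOnFinite.symm fun i => (s : Multiset (Fin (n + 1))).count i.succ
  have hsum : ∀ s : Sym (Fin (n + 1)) d, (s : Multiset (Fin (n + 1))).count 0 + (ν s).degree = d := by
    intro s
    have h1 : ∑ a, (s : Multiset (Fin (n + 1))).count a = d := by
      rw [Multiset.sum_count_eq_card (fun a _ => Finset.mem_univ a)]; exact s.2
    rw [Fin.sum_univ_succ] at h1
    rw [Finsupp.degree_eq_sum]
    exact h1
  refine ⟨fun j => ν (e j), ?_, fun j => ?_⟩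
  · refine Function.Injective.comp (g := ν) ?_ e.injective
    intro s t hst
    apply Sym.coe_injective
    ext a
    refine Fin.cases ?_ (fun j => ?_) a
    · have h1 := hsum s
      have h2 := hsum t
      rw [hst] at h1
      omega
    · exact DFunLike.congr_fun hst j
  · have := hsum (e j)
    change (ν (e j)).degree ≤ d
    omega

/-- **Polynomial ham sandwich theorem (Stone–Tukey).** Given `N = C(n+d, d) - 1` finite-volume
open sets in `ℝ^n`, there is a nonzero polynomial of degree at most `d` bisecting each of them. -/
theorem polynomial_ham_sandwich (n d : ℕ) (hn : 1 ≤ n) (hd : 1 ≤ d)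
    (U : Fin ((n + d).choose d - 1) → Set (EuclideanSpace ℝ (Fin n)))
    (hUopen : ∀ i, IsOpen (U i)) (hUvol : ∀ i, volume (U i) < ⊤) :
    ∃ P : MvPolynomial (Fin n) ℝ, P ≠ 0 ∧ P.totalDegree ≤ d ∧
      ∀ i, volume {x ∈ U i | 0 < MvPolynomial.eval (fun j => x j) P}
          = volume {x ∈ U i | MvPolynomial.eval (fun j => x j) P < 0} := by
  classical
  obtain ⟨μ, hμ, hμd⟩ := exists_monomials n d
  generalize (n + d).choose d - 1 = N at U hUopen hUvol μ hμ hμd ⊢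
  let P : (Fin (N + 1) → ℝ) → MvPolynomial (Fin n) ℝ := fun c => ∑ j, monomial (μ j) (c j)
  have hcoeff : ∀ c j, coeff (μ j) (P c) = c j := by
    intro c j
    simp [P, coeff_sum, coeff_monomial, hμ.eq_iff]
  have hP0 : ∀ c ∈ usph (N + 1), P c ≠ 0 := by
    intro c hc h0
    have : c = 0 := by
      funext j; rw [← hcoeff c j, h0]; simp
    rw [this] at hc
    simp [usph] at hc
  have hPneg : ∀ c, P (-c) = - P c := by
    intro c; simp [P]
  have hcont : ∀ x : EuclideanSpace ℝ (Fin n), Continuous fun c => eval (fun j => x j) (P c) := by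
    intro x
    simp only [P, map_sum, eval_monomial]
    fun_prop
  have hcontx : ∀ c, Continuous fun x : EuclideanSpace ℝ (Fin n) => eval (fun j => x j) (P c) := by
    intro c
    exact (MvPolynomial.continuous_eval (P c)).comp (by fun_prop)
  let F : (Fin (N + 1) → ℝ) → Fin N → ℝ := fun c i => ∫ x in U i, sg (eval (fun j => x j) (P c))
  have hfin : ∀ i, IsFiniteMeasure (volume.restrict (U i)) := fun i =>
    ⟨by simpa using hUvol i⟩
  have hFc : ContinuousOn F (usph (N + 1)) := by
    intro c hc
    refine ContinuousAt.continuousWithinAt ?_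
    refine continuousAt_pi.2 fun i => ?_
    refine continuousAt_of_dominated (bound := fun _ => 1) ?_ ?_ (integrable_const _) ?_
    · exact Filter.Eventually.of_forall fun c' =>
        (sg_meas.comp (hcontx c').measurable).aestronglyMeasurable
    · exact Filter.Eventually.of_forall fun c' => Filter.Eventually.of_forall fun x => sg_abs _
    · filter_upwards [ae_restrict_of_ae (null_zeros_euclid n (P c) (hP0 c hc))] with x hx
      exact ContinuousAt.comp (f := fun c => eval (fun j => x j) (P c)) (sg_cont hx) (hcont x).continuousAt
  obtain ⟨c, hc, hF0⟩ := borsuk_ulam F hFc (by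
    intro c
    funext i
    simp only [F, hPneg, map_neg, sg_neg, Pi.neg_apply]
    exact integral_neg _)
  refine ⟨P c, hP0 c hc, ?_, fun i => ?_⟩
  · refine totalDegree_finsetSum_le fun j _ => ?_
    refine (totalDegree_monomial_le _ _).trans ?_
    exact hμd j
  · have h := congrFun hF0 i
    have m1 : MeasurableSet {x : EuclideanSpace ℝ (Fin n) | 0 < eval (fun j => x j) (P c)} :=
      (isOpen_lt continuous_const (hcontx c)).measurableSet
    have m2 : MeasurableSet {x : EuclideanSpace ℝ (Fin n) | eval (fun j => x j) (P c) < 0} :=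
      (isOpen_lt (hcontx c) continuous_const).measurableSet
    have e1 : ∀ x : EuclideanSpace ℝ (Fin n), sg (eval (fun j => x j) (P c)) =
      {x : EuclideanSpace ℝ (Fin n) | 0 < eval (fun j => x j) (P c)}.indicator (1 : EuclideanSpace ℝ (Fin n) → ℝ) x -
      {x : EuclideanSpace ℝ (Fin n) | eval (fun j => x j) (P c) < 0}.indicator (1 : EuclideanSpace ℝ (Fin n) → ℝ) x := by
      intro x; simp [sg, Set.indicator_apply]
    simp only [F, e1] at h
    have i1 : Integrable ({x : EuclideanSpace ℝ (Fin n) | 0 < eval (fun j => x j) (P c)}.indicator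
        (1 : EuclideanSpace ℝ (Fin n) → ℝ)) (volume.restrict (U i)) :=
      (integrable_const (1:ℝ)).indicator m1
    have i2 : Integrable ({x : EuclideanSpace ℝ (Fin n) | eval (fun j => x j) (P c) < 0}.indicator
        (1 : EuclideanSpace ℝ (Fin n) → ℝ)) (volume.restrict (U i)) :=
      (integrable_const (1:ℝ)).indicator m2
    rw [integral_sub i1 i2,
      integral_indicator_one m1, integral_indicator_one m2] at h
    have h' := sub_eq_zero.1 h
    rw [measureReal_restrict_apply m1, measureReal_restrict_apply m2] at h'
    have f1 : volume ({x : EuclideanSpace ℝ (Fin n) | 0 < eval (fun j => x j) (P c)} ∩ U i) ≠ ⊤ :=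
      ((measure_mono Set.inter_subset_right).trans_lt (hUvol i)).ne
    have f2 : volume ({x : EuclideanSpace ℝ (Fin n) | eval (fun j => x j) (P c) < 0} ∩ U i) ≠ ⊤ :=
      ((measure_mono Set.inter_subset_right).trans_lt (hUvol i)).ne
    have := (ENNReal.toReal_eq_toReal_iff' f1 f2).1 h'
    rw [Set.inter_comm, Set.inter_comm _ (U i)] at this
    exact this
end
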